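/- arXiv:2405.14387 — 5 statements merged into one kernel-verified Lean document; each statement's English description precedes it below -/
import Mathlib

section
/- Let δ > 0 and α ≥ 3δ. Let G be a group acting by isometries on a δ-hyperbolic geodesic metric space X, and let U ⊆ G be a finite subset that is α-reduced at a point p ∈ X. Then for every element w of the free group F(U) on U, one has 2α·|w|_U ≤ d(ψ(w)p, p) ≤ L(U,p)·|w|_U, where ψ : F(U) → G is the natural homomorphism and |w|_U is the length of the reduced word representing w. In particular, ψ : F(U) → G is injective. -/
/-! The lower bound rests on one estimate (`reducedAt_step`): if `a :: l` is a reduced word over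
`U ∪ U⁻¹`, prepending `a` to `l` increases the displacement of `p` by at least `2 * α`.

Put `w = l.prod`, let `b` be the first letter of `l` and `w' = b⁻¹ * w`. By induction
`d(wp, p) ≥ d(w'p, p) + 2α`, which says exactly that `(wp, bp)_p ≥ d(bp, p) / 2 + α`. Since `b ≠ a⁻¹`,
the product `(a⁻¹p, bp)_p` is smaller than `min (d(ap, p)) (d(bp, p)) / 2 - α - 50δ`. In the
four-point inequality `min {(a⁻¹p, wp)_p, (wp, bp)_p} ≤ (a⁻¹p, bp)_p + δ` the minimum is therefore
attained by the first term, so `(a⁻¹p, wp)_p ≤ d(ap, p) / 2 - α`. This is the claimed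
`d(awp, p) = d(wp, a⁻¹p) ≥ d(wp, p) + 2α`.

The upper bound is the triangle inequality, and injectivity follows from the lower bound because
`α > 0`. -/

open Pointwise Filter

noncomputable section

universe u v

/-- The Gromov product `(x,y)_t`. -/
def gromov {X : Type*} [MetricSpace X] (x y t : X) : ℝ :=
  (dist x t + dist y t - dist x y) / 2

/-- `X` is `δ`-hyperbolic (four point inequality). -/
def IsDeltaHyperbolic (X : Type*) [MetricSpace X] (δ : ℝ) : Prop :=
  ∀ x y z t : X, min (gromov x y t) (gromov y z t) - δ ≤ gromov x z t

/-- `X` is a geodesic metric space: any two points are joined by an isometric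
embedding of a closed real interval. -/
def IsGeodesicSpace (X : Type*) [MetricSpace X] : Prop :=
  ∀ x y : X, ∃ f : ℝ → X, f 0 = x ∧ f (dist x y) = y ∧
    ∀ s ∈ Set.Icc (0 : ℝ) (dist x y), ∀ t ∈ Set.Icc (0 : ℝ) (dist x y),
      dist (f s) (f t) = |s - t|

/-- The action of `G` on `X` is by isometries. -/
def IsometricAction (G X : Type*) [Group G] [MetricSpace X] [MulAction G X] : Prop :=
  ∀ g : G, Isometry fun x : X => g • x

/-- The action of `G` on `X` is `(κ,N)`-acylindrical (relative to the
hyperbolicity constant `δ`). -/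
def AcylindricalAction (G X : Type*) [Group G] [MetricSpace X] [MulAction G X]
    (δ κ N : ℝ) : Prop :=
  ∀ x y : X, κ ≤ dist x y →
    {g : G | dist (g • x) x ≤ 100 * δ ∧ dist (g • y) y ≤ 100 * δ}.Finite ∧
    ({g : G | dist (g • x) x ≤ 100 * δ ∧ dist (g • y) y ≤ 100 * δ}.ncard : ℝ) ≤ N

/-- `L(U,x)`, the `ℓ^∞`-energy of `U` at `x`. -/
def energyAt {G X : Type*} [Group G] [MetricSpace X] [MulAction G X]
    (U : Set G) (x : X) : ℝ :=
  sSup ((fun u : G => dist (u • x) x) '' U)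

/-- `L(U)`, the `ℓ^∞`-energy of `U`. -/
def energy {G : Type*} (X : Type*) [Group G] [MetricSpace X] [MulAction G X]
    (U : Set G) : ℝ :=
  sInf (Set.range fun x : X => energyAt U x)

/-- The stable translation length `‖g‖^∞`, computed at the point `x` (for an
isometric action, by Fekete's subadditive lemma this infimum equals the limit of
`d(gⁿx,x)/n` and is independent of `x`). -/
def stableLength {G X : Type*} [Group G] [MetricSpace X] [MulAction G X]
    (g : G) (x : X) : ℝ :=
  ⨅ n : ℕ+, dist ((g ^ (n : ℕ)) • x) x / ((n : ℕ) : ℝ)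

/-- `g` is loxodromic for the action on `X`. -/
def IsLoxodromic {G : Type*} (X : Type*) [Group G] [MetricSpace X] [MulAction G X]
    (g : G) : Prop :=
  ∀ x : X, 0 < stableLength g x

/-- The translation length `‖g‖`. -/
def translationLength {G : Type*} (X : Type*) [Group G] [MetricSpace X] [MulAction G X]
    (g : G) : ℝ :=
  sInf (Set.range fun x : X => dist (g • x) x)

/-- The axis of `g`. -/
def axisOf {G X : Type*} [Group G] [MetricSpace X] [MulAction G X]
    (δ : ℝ) (g : G) : Set X :=
  {x : X | dist (g • x) x ≤ translationLength X g + 8 * δ}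

/-- The exponential growth rate `ω(U) = limsup (1/n) log |Uⁿ|`. -/
def growthRate {G : Type*} [Group G] (U : Set G) : ℝ :=
  limsup (fun n : ℕ => Real.log ((U ^ n).ncard : ℝ) / (n : ℝ)) atTop

/-- `S` is `α`-reduced at `p`. -/
def ReducedAt {G X : Type*} [Group G] [MetricSpace X] [MulAction G X]
    (δ α : ℝ) (S : Set G) (p : X) : Prop :=
  S ∩ S⁻¹ = ∅ ∧
  ∀ u₁ ∈ S ∪ S⁻¹, ∀ u₂ ∈ S ∪ S⁻¹, u₁ ≠ u₂ →
    gromov (u₁ • p) (u₂ • p) p <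
      min (dist (u₁ • p) p) (dist (u₂ • p) p) / 2 - α - 50 * δ

/-- A group is virtually cyclic if it has a cyclic subgroup of finite index. -/
def VirtuallyCyclic (H : Type*) [Group H] : Prop :=
  ∃ K : Subgroup H, IsCyclic K ∧ K.FiniteIndex

/-- A group is virtually nilpotent if it has a nilpotent subgroup of finite index. -/
def VirtuallyNilpotent (H : Type*) [Group H] : Prop :=
  ∃ K : Subgroup H, Group.IsNilpotent K ∧ K.FiniteIndex

/-- An `L`-local `(1,δ)`-quasi-geodesic line. -/
def IsLocalQuasiGeodesic {X : Type*} [MetricSpace X] (L δ : ℝ) (γ : ℝ → X) : Prop :=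
  ∀ s t : ℝ, |s - t| ≤ L → dist (γ s) (γ t) ≤ |s - t| ∧ |s - t| ≤ dist (γ s) (γ t) + δ

/-- `Y` is `σ`-quasi-convex. -/
def SigmaQuasiConvex {X : Type*} [MetricSpace X] (σ : ℝ) (Y : Set X) : Prop :=
  ∀ x : X, ∀ y ∈ Y, ∀ y' ∈ Y, Metric.infDist x Y ≤ gromov y y' x + σ

/-- `y` is a `δ`-projection of `x` on `Y`. -/
def IsDProj {X : Type*} [MetricSpace X] (δ : ℝ) (Y : Set X) (x y : X) : Prop :=
  y ∈ Y ∧ dist x y ≤ Metric.infDist x Y + δ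

/-- `l` is a reduced word over `U ∪ U⁻¹`. -/
def IsWordOver {G : Type*} [Group G] (U : Set G) (l : List G) : Prop :=
  (∀ a ∈ l, a ∈ U ∪ U⁻¹) ∧ l.Chain' fun a b => b ≠ a⁻¹

/-- `l` is a `τ`-shortening word over `Y` (relative to `U` and `p`). -/
def IsShorteningWord {G X : Type*} [Group G] [MetricSpace X] [MulAction G X]
    (δ τ : ℝ) (U : Set G) (p : X) (Y : Set X) (l : List G) : Prop :=
  l ≠ [] ∧ IsWordOver U l ∧
  ∃ y₀ y₁ : X, IsDProj δ Y p y₀ ∧ IsDProj δ Y (l.prod • p) y₁ ∧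
    τ < dist y₀ y₁ ∧
    (∀ a ∈ l.head?, dist p y₀ ≤ dist (a • p) p / 2 - 200 * δ) ∧
    (∀ a ∈ l.getLast?, dist (l.prod • p) y₁ ≤ dist (a • p) p / 2 - 200 * δ)

/-- `l` is a `τ`-shortening-free word relative to the family `Ys`. -/
def ShorteningFreeWord {G X : Type*} [Group G] [MetricSpace X] [MulAction G X]
    (δ τ : ℝ) (U : Set G) (p : X) (Ys : Set (Set X)) (l : List G) : Prop :=
  IsWordOver U l ∧
  ∀ Y ∈ Ys, ∀ l₀ l₁ l₂ : List G, l = l₀ ++ l₁ ++ l₂ → ¬ IsShorteningWord δ τ U p Y l₁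

/-- The word length of an element of a free group. -/
def fgNorm {α : Type*} (w : FreeGroup α) : ℕ :=
  letI := Classical.decEq α
  w.toWord.length

/-- `w` is a prefix of `r` in the free group. -/
def FGPrefix {α : Type*} (w r : FreeGroup α) : Prop :=
  fgNorm r = fgNorm w + fgNorm (w⁻¹ * r)

/-- `r'` is a cyclic permutation of `r`. -/
def IsCyclicPerm {α : Type*} (r r' : FreeGroup α) : Prop :=
  ∃ w v : FreeGroup α, r = w * v ∧ fgNorm r = fgNorm w + fgNorm v ∧
    r' = v * w ∧ fgNorm r' = fgNorm v + fgNorm w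

/-- `q` is a piece of the set of relators `R`. -/
def IsPiece {α : Type*} (R : Set (FreeGroup α)) (q : FreeGroup α) : Prop :=
  q ≠ 1 ∧ ∃ r₁ ∈ R, ∃ r₂ ∈ R, r₁ ≠ r₂ ∧ FGPrefix q r₁ ∧ FGPrefix q r₂

/-- `ξ`-uniform uniform exponential growth: every finitely generated subgroup is
either virtually nilpotent or has `ξ`-uniform exponential growth. -/
def UUEG (ξ : ℝ) (Q : Type*) [Group Q] : Prop :=
  ∀ H : Subgroup Q, H.FG →
    (VirtuallyNilpotent H ∨
      ∀ U : Set H, U.Finite → U⁻¹ = U → Subgroup.closure U = ⊤ → ξ < growthRate U)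

section

variable {G : Type*} [Group G] {X : Type*} [MetricSpace X] [MulAction G X]

lemma IsometricAction.dist_smul_smul (h : IsometricAction G X) (g : G) (x y : X) :
    dist (g • x) (g • y) = dist x y :=
  (h g).dist_eq x y

lemma IsometricAction.dist_mul_smul (h : IsometricAction G X) (g k : G) (x : X) :
    dist ((g * k) • x) x = dist (k • x) (g⁻¹ • x) := by
  rw [← h.dist_smul_smul g (k • x) (g⁻¹ • x), smul_smul, smul_inv_smul]

lemma IsometricAction.dist_inv_smul (h : IsometricAction G X) (g : G) (x : X) :
    dist (g⁻¹ • x) x = dist (g • x) x := by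
  rw [← h.dist_smul_smul g (g⁻¹ • x) x, smul_inv_smul, dist_comm]

lemma inv_mem_union_inv {U : Set G} {a : G} (ha : a ∈ U ∪ U⁻¹) : a⁻¹ ∈ U ∪ U⁻¹ := by
  rcases ha with h | h
  · exact Or.inr (by simpa using h)
  · exact Or.inl h

/-- A letter differs from its inverse, so reducedness applies to the pair `u, u⁻¹`; as Gromov
products are nonnegative, this bounds the displacement from below. -/
lemma ReducedAt.two_mul_le_dist {δ α : ℝ} (hδ : 0 < δ) {U : Set G} {p : X}
    (hU : ReducedAt δ α U p) {u : G} (hu : u ∈ U ∪ U⁻¹) : 2 * α ≤ dist (u • p) p := by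
  have hne : u ≠ u⁻¹ := by
    intro h
    have hmem : u ∈ U ∩ U⁻¹ := by
      rcases hu with h1 | h1
      · exact ⟨h1, by rw [Set.mem_inv, ← h]; exact h1⟩
      · exact ⟨by rw [Set.mem_inv, ← h] at h1; exact h1, h1⟩
    rw [hU.1] at hmem
    exact hmem
  have h := hU.2 u hu u⁻¹ (inv_mem_union_inv hu) hne
  have hmin := min_le_left (dist (u • p) p) (dist (u⁻¹ • p) p)
  have htri := dist_triangle_right (u • p) (u⁻¹ • p) p
  unfold gromov at h
  linarith

/-- Prepending a letter to a reduced word increases the displacement of `p` by at least `2 * α`. -/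
lemma reducedAt_step {δ α : ℝ} (hδ : 0 < δ) (hα : 3 * δ ≤ α)
    (hX : IsDeltaHyperbolic X δ) (hG : IsometricAction G X) {U : Set G} {p : X}
    (hU : ReducedAt δ α U p) (l : List G) : ∀ a : G, (∀ c ∈ a :: l, c ∈ U ∪ U⁻¹) →
      (a :: l).IsChain (fun c d => d ≠ c⁻¹) →
      dist (l.prod • p) p + 2 * α ≤ dist ((a :: l).prod • p) p := by
  induction l with
  | nil =>
    intro a hmem _
    simpa using hU.two_mul_le_dist hδ (hmem a (by simp))
  | cons b l ih =>
    intro a hmem hchain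
    rw [List.isChain_cons_cons] at hchain
    have hstep := ih b (fun c hc => hmem c (List.mem_cons_of_mem a hc)) hchain.2
    have ha : a⁻¹ ∈ U ∪ U⁻¹ := inv_mem_union_inv (hmem a (by simp))
    have hred := hU.2 a⁻¹ ha b (hmem b (by simp)) hchain.1.symm
    have hyp := hX (a⁻¹ • p) ((b :: l).prod • p) (b • p) p
    have hab : dist ((a :: b :: l).prod • p) p = dist ((b :: l).prod • p) (a⁻¹ • p) := by
      rw [List.prod_cons, hG.dist_mul_smul]
    have hb : dist ((b :: l).prod • p) (b • p) = dist (l.prod • p) p := by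
      rw [List.prod_cons, mul_smul, hG.dist_smul_smul]
    rw [hab]
    unfold gromov at hred hyp
    rw [dist_comm (a⁻¹ • p) ((b :: l).prod • p), hb] at hyp
    have hm1 := min_le_left (dist (a⁻¹ • p) p) (dist (b • p) p)
    have hm2 := min_le_right (dist (a⁻¹ • p) p) (dist (b • p) p)
    rcases min_cases ((dist (a⁻¹ • p) p + dist ((b :: l).prod • p) p -
        dist ((b :: l).prod • p) (a⁻¹ • p)) / 2)
      ((dist ((b :: l).prod • p) p + dist (b • p) p - dist (l.prod • p) p) / 2) with h | h
    · rw [h.1] at hyp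
      linarith
    · rw [h.1] at hyp
      linarith

lemma two_mul_length_le_dist {δ α : ℝ} (hδ : 0 < δ) (hα : 3 * δ ≤ α)
    (hX : IsDeltaHyperbolic X δ) (hG : IsometricAction G X) {U : Set G} {p : X}
    (hU : ReducedAt δ α U p) (l : List G) (hmem : ∀ c ∈ l, c ∈ U ∪ U⁻¹)
    (hchain : l.IsChain (fun c d => d ≠ c⁻¹)) :
    2 * α * (l.length : ℝ) ≤ dist (l.prod • p) p := by
  induction l with
  | nil => simp
  | cons a l ih =>
    have h1 := reducedAt_step hδ hα hX hG hU l a hmem hchain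
    have h2 := ih (fun c hc => hmem c (List.mem_cons_of_mem a hc)) hchain.tail
    rw [List.length_cons]
    push_cast
    linarith

lemma dist_le_energyAt (hG : IsometricAction G X) {U : Set G} (hfin : U.Finite) (p : X)
    {u : G} (hu : u ∈ U ∪ U⁻¹) : dist (u • p) p ≤ energyAt U p := by
  have hbdd : BddAbove ((fun u : G => dist (u • p) p) '' U) := (hfin.image _).bddAbove
  rcases hu with h | h
  · exact le_csSup hbdd ⟨u, h, rfl⟩
  · exact le_csSup hbdd ⟨u⁻¹, h, hG.dist_inv_smul u p⟩

lemma dist_le_energyAt_mul_length (hG : IsometricAction G X) {U : Set G} (hfin : U.Finite)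
    (p : X) (l : List G) (hmem : ∀ c ∈ l, c ∈ U ∪ U⁻¹) :
    dist (l.prod • p) p ≤ energyAt U p * (l.length : ℝ) := by
  induction l with
  | nil => simp
  | cons a l ih =>
    have h1 := ih (fun c hc => hmem c (List.mem_cons_of_mem a hc))
    have h2 := dist_le_energyAt hG hfin p (hmem a (by simp))
    have h3 := dist_triangle ((a :: l).prod • p) (a • p) p
    rw [List.prod_cons, mul_smul, hG.dist_smul_smul] at h3
    rw [List.prod_cons, mul_smul, List.length_cons]
    push_cast
    linarith

/-- Because `U ∩ U⁻¹ = ∅`, the reduced word of `w : FreeGroup U` evaluates letter by letter to a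
reduced word over `U ∪ U⁻¹` in `G`. -/
lemma exists_reduced_list {U : Set G} (hU : U ∩ U⁻¹ = ∅) (w : FreeGroup U) :
    ∃ l : List G, (∀ c ∈ l, c ∈ U ∪ U⁻¹) ∧ l.IsChain (fun c d => d ≠ c⁻¹) ∧
      l.length = fgNorm w ∧ l.prod = FreeGroup.lift (Subtype.val : U → G) w := by
  letI := Classical.decEq U
  have hdisj : ∀ x ∈ U, x⁻¹ ∉ U := fun x hx hx' => by
    have : x ∈ U ∩ U⁻¹ := ⟨hx, hx'⟩
    rw [hU] at this
    exact this
  refine ⟨w.toWord.map fun x => cond x.2 (x.1 : G) (x.1 : G)⁻¹, ?_, ?_, ?_, ?_⟩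
  · intro c hc
    obtain ⟨⟨x, s⟩, -, rfl⟩ := List.mem_map.1 hc
    cases s
    · exact inv_mem_union_inv (Or.inl x.2)
    · exact Or.inl x.2
  · rw [List.isChain_map]
    refine List.IsChain.imp ?_ (FreeGroup.isReduced_toWord (x := w))
    rintro ⟨x, s⟩ ⟨y, t⟩ h heq
    cases s <;> cases t <;> simp only [cond_true, cond_false, inv_inv] at heq
    · exact hdisj y y.2 (heq ▸ x.2)
    · exact absurd (h (Subtype.ext heq.symm)) (by simp)
    · exact absurd (h (Subtype.ext (inv_injective heq).symm)) (by simp)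
    · exact hdisj x x.2 (heq ▸ y.2)
  · rw [List.length_map]
    rfl
  · conv_rhs => rw [← FreeGroup.mk_toWord (x := w)]
    rw [FreeGroup.lift_mk]

end

/-- the orbit map of a free group on a reduced subset is a
quasi-isometric embedding; in particular the natural homomorphism is injective. -/
theorem reduced_subset_qi_embedding :
    ∀ (G : Type u) [Group G] (X : Type v) [MetricSpace X] [MulAction G X],
    ∀ δ α : ℝ, 0 < δ → 3 * δ ≤ α →
      IsDeltaHyperbolic X δ → IsGeodesicSpace X → IsometricAction G X →
      ∀ (U : Set G) (p : X), U.Finite → ReducedAt δ α U p →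
        (∀ w : FreeGroup U,
          2 * α * (fgNorm w : ℝ) ≤
            dist ((FreeGroup.lift (Subtype.val : U → G) w) • p) p ∧
          dist ((FreeGroup.lift (Subtype.val : U → G) w) • p) p ≤
            energyAt U p * (fgNorm w : ℝ)) ∧
        Function.Injective ⇑(FreeGroup.lift (Subtype.val : U → G)) := by
  intro G _ X _ _ δ α hδ hα hX _ hG U p hfin hU
  have hbounds : ∀ w : FreeGroup U,
      2 * α * (fgNorm w : ℝ) ≤ dist ((FreeGroup.lift (Subtype.val : U → G) w) • p) p ∧
      dist ((FreeGroup.lift (Subtype.val : U → G) w) • p) p ≤ energyAt U p * (fgNorm w : ℝ) := by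
    intro w
    obtain ⟨l, hmem, hchain, hlen, hprod⟩ := exists_reduced_list hU.1 w
    rw [← hlen, ← hprod]
    exact ⟨two_mul_length_le_dist hδ hα hX hG hU l hmem hchain,
      dist_le_energyAt_mul_length hG hfin p l hmem⟩
  refine ⟨hbounds, (injective_iff_map_eq_one _).2 fun w hw => ?_⟩
  have h := (hbounds w).1
  rw [hw, one_smul, dist_self] at h
  have hn : fgNorm w = 0 := by
    have h0 : (fgNorm w : ℝ) ≤ 0 := by
      by_contra! hpos
      have : 0 < 2 * α * (fgNorm w : ℝ) := mul_pos (by linarith) hpos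
      linarith
    exact_mod_cast le_antisymm h0 (Nat.cast_nonneg _)
  letI := Classical.decEq U
  exact FreeGroup.toWord_eq_nil_iff.1 (List.length_eq_zero_iff.1 hn)
end
end

section
/- Let δ > 0 and α ≥ 3δ. Let G be a group acting by isometries on a δ-hyperbolic geodesic metric space X, let p ∈ X, and let U ⊆ G be a finite symmetric subset containing a loxodromic element g with ‖g‖^∞ > 10³δ. Let A_g = {x ∈ X : d(gx,x) ≤ ‖g‖ + 8δ} be the axis of g, and assume there exists a 10³δ-local (1,δ)-quasi-geodesic γ : ℝ → X whose image is invariant under g. Let D ≥ 0 and let U' ⊆ U be a subset such that for all distinct u,v ∈ U' one has diam((u·A_g)^{+20δ} ∩ (v·A_g)^{+20δ}) ≤ D. Set b₀ = (2/‖g‖^∞)·(D + 5·L(U,p) + 104δ + α). Then for every integer b ≥ b₀, the set S = { u g^b u⁻¹ : u ∈ U' } satisfies: (1) S ⊆ U^{b+2}; (2) |S| = |U'|; (3) S is α-reduced at p. -/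
/-! Fix `h = g` or `h = g⁻¹`, write `ℓ` for the stable translation length and
`a n = d(hⁿ x, x)`. Everything is derived from the four point inequality applied to points of
orbits of `h`.

* For `λ < ℓ` the sequence `a n - n λ` tends to infinity, so it has arbitrarily late records `N`;
  at a record, `a (N - i) ≤ a N - i λ`. The point `h^N x` thus plays the role of the attracting
  fixed point of `h`, and the four point inequality for `x, hⁿ x, h²ⁿ x, h^N x` gives
  `a (2n) ≥ a n + n λ - 2δ` (`dist_double_ge`). This settles the pair `u g^b u⁻¹, u g^{-b} u⁻¹`.
* Conversely `d(h² y, y) ≤ d(h y, y) + ℓ + 2δ` (`dist_sq_le`).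
* If `y` lies on a geodesic `[x, h^b x]` far from both endpoints, then `h⁻¹ y` and `h y` lie on
  opposite sides of `y`, so `(y, h² y)_{h y} ≤ 2δ`, and the previous item yields
  `d(h y, y) ≤ ℓ + 6δ`, so `y` belongs to the axis of `g` (`mem_axis_of_mid`).
* For `u ≠ v` a large Gromov product would make geodesics from `p` to `u g^{±b} u⁻¹ p` and to
  `v g^{±b} v⁻¹ p` stay `4δ`-close for a time exceeding `4 L(U,p) + D`. Their middle parts lie in
  `u A_g` and `v A_g`, contradicting the bound `D` (`gromov_lt_of_ne`).

The strict inequality on Gromov products also forces the conjugates to be distinct, since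
`(x, x)_p = d(x, p)`. -/


open Pointwise Filter

noncomputable section

universe u v

/-! ### Hyperbolic geometry of orbits -/

section Orbits

variable {G : Type u} [Group G] {X : Type v} [MetricSpace X] [MulAction G X] [IsIsometricSMul G X]

/-- The four point inequality in terms of sums of opposite distances. -/
lemma four_point {δ : ℝ} (hyp : IsDeltaHyperbolic X δ) (x y z t : X) :
    dist x z + dist y t ≤ max (dist x y + dist z t) (dist y z + dist x t) + 2 * δ := by
  have h := hyp x y z t
  unfold gromov at h
  rcases min_le_iff.1 (sub_le_iff_le_add.1 h) with h | h
  · linarith [le_max_left (dist x y + dist z t) (dist y z + dist x t)]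
  · linarith [le_max_right (dist x y + dist z t) (dist y z + dist x t)]

lemma dist_pow_pow (h : G) (x : X) {i j : ℕ} (hij : i ≤ j) :
    dist (h ^ j • x) (h ^ i • x) = dist (h ^ (j - i) • x) x := by
  conv_lhs => rw [← Nat.add_sub_cancel' hij, pow_add, mul_smul, dist_smul]

lemma dist_pow_pow' (h : G) (x : X) {i j : ℕ} (hij : i ≤ j) :
    dist (h ^ i • x) (h ^ j • x) = dist (h ^ (j - i) • x) x := by
  rw [dist_comm, dist_pow_pow h x hij]

lemma dist_inv_pow (h : G) (x : X) (n : ℕ) :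
    dist (h⁻¹ ^ n • x) x = dist (h ^ n • x) x := by
  rw [← dist_smul (h ^ n), smul_smul, inv_pow, mul_inv_cancel, one_smul, dist_comm]

lemma dist_pow_mul_le (h : G) (x : X) (n k : ℕ) :
    dist (h ^ (n * k) • x) x ≤ k * dist (h ^ n • x) x := by
  induction k with
  | zero => simp
  | succ k ih =>
    have h1 := dist_triangle (h ^ (n * (k + 1)) • x) (h ^ (n * k) • x) x
    rw [dist_pow_pow h x (by nlinarith : n * k ≤ n * (k + 1))] at h1
    have : n * (k + 1) - n * k = n := by rw [mul_add, mul_one]; omega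
    rw [this] at h1
    push_cast
    linarith

/-- The stable length is at most `d(hⁿ x, x) / n` at every base point `x`, not only at the point
at which it is computed. -/
lemma stableLength_mul_le (h : G) (p x : X) (n : ℕ) :
    n * stableLength h p ≤ dist (h ^ n • x) x := by
  rcases Nat.eq_zero_or_pos n with rfl | hn
  · simp
  have key : ∀ k : ℕ, 0 < k →
      k * (n * stableLength h p) ≤ k * dist (h ^ n • x) x + 2 * dist x p := by
    intro k hk
    have hb : BddBelow (Set.range fun m : ℕ+ => dist ((h ^ (m : ℕ)) • p) p / ((m : ℕ) : ℝ)) :=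
      ⟨0, by rintro _ ⟨m, rfl⟩; positivity⟩
    have h1 := ciInf_le hb ⟨n * k, Nat.mul_pos hn hk⟩
    have h2 : stableLength h p ≤ dist ((h ^ (n * k)) • p) p / ((n * k : ℕ) : ℝ) := h1
    rw [le_div_iff₀ (by exact_mod_cast Nat.mul_pos hn hk)] at h2
    have h3 := dist_pow_mul_le h x n k
    have h4 := dist_triangle4 (h ^ (n * k) • p) (h ^ (n * k) • x) x p
    rw [dist_smul, dist_comm p x] at h4
    push_cast at h2
    nlinarith
  by_contra hlt
  push Not at hlt
  obtain ⟨k, hk⟩ := exists_nat_gt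
    (2 * dist x p / (n * stableLength h p - dist (h ^ n • x) x))
  rw [div_lt_iff₀ (by linarith)] at hk
  have hk0 : 0 < k := by
    rcases Nat.eq_zero_or_pos k with rfl | h0
    · have := dist_nonneg (x := x) (y := p)
      simp only [Nat.cast_zero, zero_mul] at hk
      linarith
    · exact h0
  have := key k hk0
  nlinarith

lemma exists_dist_lt (h : G) (p : X) {r : ℝ} (hr : stableLength h p < r) (x : X) :
    ∃ n : ℕ, 0 < n ∧ dist (h ^ n • x) x < n * r := by
  -- The infima at `x` and at `p` agree by `stableLength_mul_le`.
  have hx : stableLength h x ≤ stableLength h p := by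
    refine le_ciInf fun m => ?_
    rw [le_div_iff₀ (by exact_mod_cast m.pos), mul_comm]
    exact stableLength_mul_le h x p m
  obtain ⟨m, hm⟩ := exists_lt_of_ciInf_lt (lt_of_le_of_lt hx hr)
  refine ⟨m, m.pos, ?_⟩
  rwa [div_lt_iff₀ (by exact_mod_cast m.pos), mul_comm] at hm

lemma stableLength_inv (h : G) (p : X) : stableLength h⁻¹ p = stableLength h p := by
  unfold stableLength
  simp only [dist_inv_pow]

/-- Arbitrarily late records of `d(hⁿ x, x) - n r` for `r` below the stable length. -/
lemma exists_record (h : G) (p x : X) {r : ℝ} (hr : r < stableLength h p) (K : ℕ) :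
    ∃ N ≥ K, ∀ i ≤ N, dist (h ^ (N - i) • x) x ≤ dist (h ^ N • x) x - i * r := by
  have ht : Tendsto (fun n : ℕ => dist (h ^ n • x) x - n * r) atTop atTop := by
    have h1 : Tendsto (fun n : ℕ => (n : ℝ) * (stableLength h p - r)) atTop atTop :=
      tendsto_natCast_atTop_atTop.atTop_mul_const (by linarith)
    refine tendsto_atTop_mono (fun n => ?_) h1
    have := stableLength_mul_le h p x n
    linarith
  obtain ⟨N, hN, hrec⟩ := Filter.high_scores ht K
  refine ⟨N, hN, fun i hi => ?_⟩
  rcases Nat.eq_zero_or_pos i with rfl | hi0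
  · simp
  · have := hrec (N - i) (by omega)
    simp only [Nat.cast_sub hi] at this
    linarith

lemma dist_double_ge {δ : ℝ} (hyp : IsDeltaHyperbolic X δ) (h : G) (p x : X) {r : ℝ}
    (hr : r < stableLength h p) (n : ℕ) (hn : δ < n * r) :
    dist (h ^ n • x) x + n * r - 2 * δ ≤ dist (h ^ (2 * n) • x) x := by
  obtain ⟨N, hN, hrec⟩ := exists_record h p x hr (2 * n)
  have h4 := four_point hyp x (h ^ n • x) (h ^ N • x) (h ^ (2 * n) • x)
  rw [dist_pow_pow' h x (by omega : n ≤ 2 * n), dist_pow_pow h x hN,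
    dist_pow_pow' h x (by omega : n ≤ N), dist_comm x, dist_comm x, dist_comm x] at h4
  have e : 2 * n - n = n := by omega
  rw [e] at h4
  have r1 := hrec n (by omega)
  have r2 := hrec (2 * n) hN
  push_cast at r2
  rcases max_cases (dist (h ^ n • x) x + dist (h ^ (N - 2 * n) • x) x)
    (dist (h ^ (N - n) • x) x + dist (h ^ (2 * n) • x) x) with ⟨hm, _⟩ | ⟨hm, _⟩ <;>
  · rw [hm] at h4
    linarith

lemma dist_sq_le {δ : ℝ} (hyp : IsDeltaHyperbolic X δ) (h : G) (p y : X)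
    (hpos : 0 < stableLength h p) :
    dist (h ^ 2 • y) y ≤ dist (h • y) y + stableLength h p + 2 * δ := by
  refine le_of_forall_pos_le_add fun ε hε => ?_
  by_contra hlt
  push Not at hlt
  set l := stableLength h p
  -- Otherwise `d(hⁿ y, y)` would grow by more than `l + ε` at each step.
  have step : ∀ n : ℕ,
      dist (h ^ n • y) y ≤ dist (h ^ (n + 1) • y) y ∧
        n * (l + ε) ≤ dist (h ^ (n + 1) • y) y := by
    intro n
    induction n with
    | zero => simp
    | succ n ih =>
      have h4 := four_point hyp y (h ^ 1 • y) (h ^ 2 • y) (h ^ (n + 2) • y)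
      rw [dist_pow_pow' h y (by omega : 1 ≤ n + 2), dist_pow_pow' h y (by omega : 2 ≤ n + 2),
        dist_pow_pow' h y (by omega : 1 ≤ 2), dist_comm y, dist_comm y, dist_comm y] at h4
      have e1 : n + 2 - 1 = n + 1 := by omega
      have e2 : n + 2 - 2 = n := by omega
      have e3 : 2 - 1 = 1 := rfl
      rw [e1, e2, e3, pow_one] at h4
      have : dist (h ^ (n + 1) • y) y + (l + ε) ≤ dist (h ^ (n + 2) • y) y := by
        rcases max_cases (dist (h • y) y + dist (h ^ n • y) y)
          (dist (h • y) y + dist (h ^ (n + 2) • y) y) with ⟨hm, _⟩ | ⟨hm, _⟩ <;>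
        · rw [hm] at h4
          linarith [ih.1]
      refine ⟨by linarith, ?_⟩
      push_cast
      have := ih.2
      show ((n : ℝ) + 1) * (l + ε) ≤ dist (h ^ (n + 2) • y) y
      linarith
  obtain ⟨n, hn, hnlt⟩ := exists_dist_lt h p (show l < l + ε / 2 by linarith) y
  obtain ⟨k, hk⟩ := exists_nat_gt ((l + ε) / (ε / 2))
  rw [div_lt_iff₀ (by linarith)] at hk
  have hk0 : 0 < k := by
    rcases Nat.eq_zero_or_pos k with rfl | h0
    · simp only [Nat.cast_zero, zero_mul] at hk
      linarith
    · exact h0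
  obtain ⟨m, hm⟩ : ∃ m, n * k = m + 1 := ⟨n * k - 1, by have := Nat.mul_pos hn hk0; omega⟩
  have h1 := (step m).2
  have h2 := dist_pow_mul_le h y n k
  rw [hm] at h2
  have hm' : (n : ℝ) * k = m + 1 := by exact_mod_cast hm
  have hn1 : (1 : ℝ) ≤ n := by exact_mod_cast hn
  have hk1 : (0 : ℝ) < k := by exact_mod_cast hk0
  have h3 : k * dist (h ^ n • y) y ≤ k * (n * (l + ε / 2)) :=
    mul_le_mul_of_nonneg_left hnlt.le hk1.le
  have h5 : (k : ℝ) * (n * (l + ε / 2)) = (m + 1) * (l + ε / 2) := by rw [← hm']; ring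
  have h6 : (k : ℝ) * (ε / 2) ≤ (m + 1) * (ε / 2) := by
    rw [← hm']
    have : (k : ℝ) ≤ n * k := le_mul_of_one_le_left hk1.le hn1
    exact mul_le_mul_of_nonneg_right this (by linarith)
  nlinarith

/-- A point `y` on a geodesic `[x, h^b x]` that is further than `C + 2δ ≥ d(h x, x) + 2δ` from
both endpoints is moved by `h` by little more than the stable length. -/
lemma dist_smul_le_of_mid {δ : ℝ} (hδ : 0 < δ) (hyp : IsDeltaHyperbolic X δ) (h : G) (p x y : X)
    {C : ℝ} {b : ℕ} (hl : 10 ^ 3 * δ < stableLength h p) (hb : 1 ≤ b)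
    (hC : dist (h • x) x ≤ C) (hbC : 2 * (C + 2 * δ) < b * stableLength h p)
    (hy : dist x y + dist y (h ^ b • x) = dist (h ^ b • x) x)
    (h1 : C + 2 * δ < dist x y) (h2 : C + 2 * δ < dist y (h ^ b • x)) :
    dist (h • y) y ≤ stableLength h p + 6 * δ := by
  set l := stableLength h p with hl_def
  -- Comparison of `d(h^(b-1) x, x)` with `d(h^b x, x)`, using a record at rate `l / 2`.
  have hab : dist (h ^ (b - 1) • x) x ≤ dist (h ^ b • x) x - l / 2 + 2 * δ := by
    obtain ⟨N, hN, hrec⟩ := exists_record h p x (show l / 2 < stableLength h p by linarith) b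
    have h4 := four_point hyp (h ^ 1 • x) x (h ^ b • x) (h ^ N • x)
    rw [dist_pow_pow' h x hb, dist_pow_pow' h x hN, dist_pow_pow' h x (by omega : 1 ≤ N),
      dist_comm x, dist_comm x, pow_one] at h4
    have r1 := hrec 1 (by omega)
    have r2 := hrec b hN
    push_cast at r1
    have := dist_nonneg (x := h ^ (b - 1) • x) (y := x)
    rcases max_cases (dist (h • x) x + dist (h ^ (N - b) • x) x)
      (dist (h ^ b • x) x + dist (h ^ (N - 1) • x) x) with ⟨hm, _⟩ | ⟨hm, _⟩ <;>
    · rw [hm] at h4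
      linarith
  have hly : l ≤ dist (h • y) y := by
    have := stableLength_mul_le h p y 1
    simpa using this
  -- `h⁻¹ y` is on the side of `x`, seen from `y`.
  have z1 : dist (h • x) y ≤ dist x y - l / 2 + 4 * δ := by
    have h4 := four_point hyp (h • x) x y (h ^ b • x)
    have e : dist (h • x) (h ^ b • x) = dist (h ^ (b - 1) • x) x := by
      have := dist_pow_pow' h x hb
      rwa [pow_one] at this
    rw [e, dist_comm x (h ^ b • x)] at h4
    have := dist_nonneg (x := h • x) (y := y)
    rcases max_cases (dist (h • x) x + dist y (h ^ b • x))
      (dist x y + dist (h ^ (b - 1) • x) x) with ⟨hm, _⟩ | ⟨hm, _⟩ <;>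
    · rw [hm] at h4
      linarith
  -- `h y` is on the side of `h^b x`, seen from `y`.
  have z2 : dist y (h ^ (b - 1) • x) ≤ dist y (h ^ b • x) - l / 2 + 4 * δ := by
    have h4 := four_point hyp y x (h ^ (b - 1) • x) (h ^ b • x)
    have e : dist (h ^ (b - 1) • x) (h ^ b • x) = dist (h • x) x := by
      have := dist_pow_pow' h x (by omega : b - 1 ≤ b)
      rwa [(by omega : b - (b - 1) = 1), pow_one] at this
    rw [e, dist_comm x (h ^ b • x), dist_comm x (h ^ (b - 1) • x), dist_comm y x] at h4
    have := dist_nonneg (x := y) (y := h ^ (b - 1) • x)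
    rcases max_cases (dist x y + dist (h • x) x)
      (dist (h ^ (b - 1) • x) x + dist y (h ^ b • x)) with ⟨hm, _⟩ | ⟨hm, _⟩ <;>
    · rw [hm] at h4
      linarith
  -- Distances among the points `h x`, `y`, `h² y`, `h^(b+1) x` seen from `h y`.
  have hyy : dist (h ^ 2 • y) (h • y) = dist (h • y) y := by
    rw [pow_two, mul_smul, dist_smul]
  have q1 : dist (h • x) (h • y) = dist x y := dist_smul _ _ _
  have q2 : dist (h • h ^ b • x) (h • y) = dist y (h ^ b • x) := by rw [dist_smul, dist_comm]
  have q3 : dist (h • x) (h • h ^ b • x) = dist (h ^ b • x) x := by rw [dist_smul, dist_comm]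
  have q4 : dist (h ^ 2 • y) (h • h ^ b • x) = dist y (h ^ (b - 1) • x) := by
    have : h • h ^ b • x = h ^ 2 • h ^ (b - 1) • x := by
      rw [smul_smul, smul_smul, ← pow_succ', ← pow_add]
      congr 2
      omega
    rw [this, dist_smul]
  have k1 := hyp (h • x) y (h • h ^ b • x) (h • y)
  have k2 := hyp y (h ^ 2 • y) (h • h ^ b • x) (h • y)
  unfold gromov at k1 k2
  rw [q1, q2, q3, dist_comm y (h • y)] at k1
  rw [q2, q4, hyy, dist_comm y (h • y), dist_comm y (h ^ 2 • y)] at k2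
  have hsq := dist_sq_le hyp h p y (by linarith)
  rcases min_le_iff.1 (sub_le_iff_le_add.1 k1) with k1 | k1
  · linarith
  rcases min_le_iff.1 (sub_le_iff_le_add.1 k2) with k2 | k2 <;> linarith

lemma mem_axis_of_mid {δ : ℝ} (hδ : 0 < δ) (hyp : IsDeltaHyperbolic X δ) (g h : G)
    (hgh : h = g ∨ h = g⁻¹) (p x y : X)
    {C : ℝ} {b : ℕ} (hl : 10 ^ 3 * δ < stableLength g p) (hb : 1 ≤ b)
    (hC : dist (g • x) x ≤ C) (hbC : 2 * (C + 2 * δ) < b * stableLength g p)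
    (hy : dist x y + dist y (h ^ b • x) = dist (h ^ b • x) x)
    (h1 : C + 2 * δ < dist x y) (h2 : C + 2 * δ < dist y (h ^ b • x)) :
    y ∈ axisOf δ g := by
  have hinv : ∀ z : X, dist (g⁻¹ • z) z = dist (g • z) z := fun z => by
    have := dist_inv_pow g z 1
    simpa using this
  have hs : stableLength h p = stableLength g p := by
    rcases hgh with rfl | rfl
    · rfl
    · exact stableLength_inv g p
  have hd : ∀ z : X, dist (h • z) z = dist (g • z) z := fun z => by
    rcases hgh with rfl | rfl
    · rfl
    · exact hinv z
  have key := dist_smul_le_of_mid hδ hyp h p x y (hs ▸ hl) hb (by rwa [hd]) (hs ▸ hbC) hy h1 h2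
  rw [hd, hs] at key
  have ht : stableLength g p ≤ translationLength X g := by
    refine le_csInf ⟨_, p, rfl⟩ ?_
    rintro _ ⟨z, rfl⟩
    have := stableLength_mul_le g p z 1
    simpa using this
  show dist (g • y) y ≤ translationLength X g + 8 * δ
  linarith

/-! ### Gromov products of conjugates -/

lemma dist_conj (u k : G) (p : X) :
    dist ((u * k * u⁻¹) • p) p = dist (k • u⁻¹ • p) (u⁻¹ • p) := by
  rw [mul_smul, mul_smul, ← dist_smul u (k • u⁻¹ • p), smul_inv_smul]

/-- Points of a geodesic `[p, u h^b u⁻¹ p]` at distance more than `3L + 2δ` from the endpoints lie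
on the translate `u A_g` of the axis. -/
lemma mem_smul_axis {δ L : ℝ} (hδ : 0 < δ) (hyp : IsDeltaHyperbolic X δ) (g h u : G)
    (hgh : h = g ∨ h = g⁻¹) (p z : X) {b : ℕ} (hl : 10 ^ 3 * δ < stableLength g p) (hb : 1 ≤ b)
    (hg : dist (g • p) p ≤ L) (hu : dist (u • p) p ≤ L)
    (hbL : 2 * (3 * L + 2 * δ) < b * stableLength g p)
    (hz : dist p z + dist z ((u * h ^ b * u⁻¹) • p) = dist ((u * h ^ b * u⁻¹) • p) p)
    (h1 : 3 * L + 2 * δ < dist p z) (h2 : 3 * L + 2 * δ < dist z ((u * h ^ b * u⁻¹) • p)) :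
    z ∈ u • axisOf δ g := by
  rw [Set.mem_smul_set_iff_inv_smul_mem]
  have e1 : dist (u⁻¹ • p) (u⁻¹ • z) = dist p z := dist_smul _ _ _
  have e2 : dist (u⁻¹ • z) (h ^ b • u⁻¹ • p) = dist z ((u * h ^ b * u⁻¹) • p) := by
    rw [mul_smul, mul_smul, ← dist_smul u (u⁻¹ • z), smul_inv_smul]
  refine mem_axis_of_mid (C := 3 * L) hδ hyp g h hgh p (u⁻¹ • p) (u⁻¹ • z) hl hb ?_ hbL ?_ ?_ ?_
  · have hui : dist (u⁻¹ • p) p ≤ L := by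
      rwa [← dist_smul u, smul_inv_smul, dist_comm]
    have := dist_triangle4 (g • u⁻¹ • p) (g • p) p (u⁻¹ • p)
    rw [dist_smul, dist_comm p (u⁻¹ • p)] at this
    linarith
  · rw [e1, e2, hz, dist_conj]
  · rwa [e1]
  · rwa [e2]

lemma gromov_lt_of_ne {δ α L D : ℝ} (hδ : 0 < δ) (hα : 3 * δ ≤ α) (hyp : IsDeltaHyperbolic X δ)
    (geo : IsGeodesicSpace X) (g h k u v : G)
    (hh : h = g ∨ h = g⁻¹) (hk : k = g ∨ k = g⁻¹) (p : X) {b : ℕ}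
    (hl : 10 ^ 3 * δ < stableLength g p) (hb : 1 ≤ b) (hD : 0 ≤ D)
    (hg : dist (g • p) p ≤ L) (hu : dist (u • p) p ≤ L) (hv : dist (v • p) p ≤ L)
    (hbl : 2 * (D + 5 * L + 104 * δ + α) ≤ b * stableLength g p)
    (hdiam : EMetric.diam (Metric.cthickening (20 * δ) (u • (axisOf δ g : Set X)) ∩
      Metric.cthickening (20 * δ) (v • (axisOf δ g : Set X))) ≤ ENNReal.ofReal D) :
    gromov ((u * h ^ b * u⁻¹) • p) ((v * k ^ b * v⁻¹) • p) p <
      min (dist ((u * h ^ b * u⁻¹) • p) p) (dist ((v * k ^ b * v⁻¹) • p) p) / 2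
        - α - 50 * δ := by
  have hlen : ∀ w j : G, j = g ∨ j = g⁻¹ →
      b * stableLength g p ≤ dist ((w * j ^ b * w⁻¹) • p) p := by
    intro w j hj
    rw [dist_conj]
    rcases hj with rfl | rfl
    · exact stableLength_mul_le _ _ _ _
    · rw [dist_inv_pow]
      exact stableLength_mul_le _ _ _ _
  have hL : 10 ^ 3 * δ < L := by
    have := stableLength_mul_le g p p 1
    simp only [Nat.cast_one, one_mul, pow_one] at this
    linarith
  have m1 := hlen u h hh
  have m2 := hlen v k hk
  by_contra hge
  push Not at hge
  have hzu := fun z => mem_smul_axis (L := L) hδ hyp g h u hh p z hl hb hg hu (by linarith)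
  have hzv := fun z => mem_smul_axis (L := L) hδ hyp g k v hk p z hl hb hg hv (by linarith)
  generalize (u * h ^ b * u⁻¹) • p = x at *
  generalize (v * k ^ b * v⁻¹) • p = y at *
  have hm1 := min_le_left (dist x p) (dist y p)
  have hm2 := min_le_right (dist x p) (dist y p)
  have hm3 : b * stableLength g p ≤ min (dist x p) (dist y p) := le_min m1 m2
  set T := min (dist x p) (dist y p) / 2 - α - 50 * δ with hT
  obtain ⟨f, f0, f1, hf⟩ := geo p x
  obtain ⟨fy, fy_zero, fy_end, hfy⟩ := geo p y
  rw [dist_comm p x] at hf f1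
  rw [dist_comm p y] at hfy fy_end
  -- Distances along a geodesic issued from `p`.
  have along : ∀ (F : ℝ → X) (w : X), F 0 = p → F (dist w p) = w →
      (∀ s ∈ Set.Icc (0 : ℝ) (dist w p), ∀ t ∈ Set.Icc (0 : ℝ) (dist w p),
        dist (F s) (F t) = |s - t|) → ∀ t, 0 ≤ t → t ≤ dist w p →
      dist p (F t) = t ∧ dist (F t) w = dist w p - t := by
    intro F w F0 F1 hF t ht0 ht1
    constructor
    · conv_lhs => rw [← F0]
      rw [hF 0 ⟨le_rfl, dist_nonneg⟩ t ⟨ht0, ht1⟩, zero_sub, abs_neg, abs_of_nonneg ht0]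
    · conv_lhs => rw [← F1]
      rw [hF t ⟨ht0, ht1⟩ _ ⟨dist_nonneg, le_rfl⟩, abs_sub_comm, abs_of_nonneg (by linarith)]
  have mem : ∀ t, 4 * L ≤ t → t ≤ T →
      f t ∈ Metric.cthickening (20 * δ) (u • (axisOf δ g : Set X)) ∩
        Metric.cthickening (20 * δ) (v • (axisOf δ g : Set X)) := by
    intro t ht0 ht1
    obtain ⟨a1, a2⟩ := along f x f0 f1 hf t (by linarith) (by linarith)
    obtain ⟨b1, b2⟩ := along fy y fy_zero fy_end hfy t (by linarith) (by linarith)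
    have A := hzu (f t) (by linarith) (by linarith) (by linarith)
    have B := hzv (fy t) (by linarith) (by linarith) (by linarith)
    -- The two geodesics are `4δ`-close at time `t ≤ (x, y)_p`.
    have close : dist (f t) (fy t) ≤ 4 * δ := by
      have k1 := hyp (f t) x (fy t) p
      have k2 := hyp x y (fy t) p
      have g1 : gromov (f t) x p = t := by
        unfold gromov
        rw [dist_comm (f t) p]
        linarith
      have g2 : gromov y (fy t) p = t := by
        unfold gromov
        rw [dist_comm (fy t) p, dist_comm y (fy t)]
        linarith
      rw [g1] at k1
      rw [g2] at k2
      have k3 : t ≤ gromov x y p := by linarith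
      rw [min_eq_right k3] at k2
      have k4 : t - δ ≤ min t (gromov x (fy t) p) := le_min (by linarith) k2
      have k5 : t - 2 * δ ≤ gromov (f t) (fy t) p := by linarith
      unfold gromov at k5
      rw [dist_comm (f t) p, dist_comm (fy t) p] at k5
      linarith
    exact ⟨Metric.mem_cthickening_of_dist_le _ _ _ _ A (by rw [dist_self]; linarith),
      Metric.mem_cthickening_of_dist_le _ _ _ _ B (by linarith)⟩
  have hTL : D + 4 * L < T := by linarith
  have d1 := Metric.edist_le_ediam_of_mem (mem (4 * L) le_rfl (by linarith))
    (mem T (by linarith) le_rfl)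
  have d2 := d1.trans hdiam
  rw [edist_dist, ENNReal.ofReal_le_ofReal_iff hD,
    hf _ ⟨by linarith, by linarith⟩ _ ⟨by linarith, by linarith⟩, abs_sub_comm,
    abs_of_nonneg (by linarith)] at d2
  linarith

lemma gromov_comm' (x y t : X) : gromov x y t = gromov y x t := by
  unfold gromov
  rw [dist_comm x y, add_comm (dist x t)]

lemma gromov_lt_of_inv {δ α : ℝ} (hδ : 0 < δ) (hyp : IsDeltaHyperbolic X δ)
    (g u : G) (p : X) {b : ℕ} (hb : 1 ≤ b)
    (hbl : 103 * δ + 2 * α < b * stableLength g p) (hα : 0 ≤ α) :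
    gromov ((u * g ^ b * u⁻¹) • p) ((u * g⁻¹ ^ b * u⁻¹) • p) p <
      min (dist ((u * g ^ b * u⁻¹) • p) p) (dist ((u * g⁻¹ ^ b * u⁻¹) • p) p) / 2
        - α - 50 * δ := by
  have hb' : (0 : ℝ) < b := by exact_mod_cast hb
  have e0 : (b : ℝ) * (stableLength g p - δ / b) = b * stableLength g p - δ := by
    field_simp
  have key := dist_double_ge hyp g p (u⁻¹ • p) (r := stableLength g p - δ / b)
    (by have : 0 < δ / b := by positivity
        linarith) b (by linarith)
  have e1 : dist ((u * g⁻¹ ^ b * u⁻¹) • p) p = dist ((u * g ^ b * u⁻¹) • p) p := by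
    rw [dist_conj, dist_conj, dist_inv_pow]
  have e2 : dist ((u * g ^ b * u⁻¹) • p) ((u * g⁻¹ ^ b * u⁻¹) • p) =
      dist (g ^ (2 * b) • u⁻¹ • p) (u⁻¹ • p) := by
    simp only [mul_smul]
    rw [dist_smul, ← dist_smul (g ^ b), inv_pow, smul_inv_smul, two_mul, pow_add, mul_smul]
  unfold gromov
  rw [e1, e2, min_self, dist_conj]
  linarith

end Orbits

/-- producing reduced subsets from conjugates of a high power of
a loxodromic element. -/
theorem producing_reduced_subsets :
    ∀ (G : Type u) [Group G] (X : Type v) [MetricSpace X] [MulAction G X],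
    ∀ δ α : ℝ, 0 < δ → 3 * δ ≤ α →
      IsDeltaHyperbolic X δ → IsGeodesicSpace X → IsometricAction G X →
      ∀ (p : X) (U : Set G), U.Finite → U⁻¹ = U →
      ∀ g ∈ U, (∀ x : X, 10 ^ 3 * δ < stableLength g x) →
        (∃ γ : ℝ → X, IsLocalQuasiGeodesic (10 ^ 3 * δ) δ γ ∧
          g • Set.range γ = Set.range γ) →
        ∀ D : ℝ, 0 ≤ D →
        ∀ U' : Set G, U' ⊆ U →
          (∀ u ∈ U', ∀ v ∈ U', u ≠ v →
            EMetric.diam (Metric.cthickening (20 * δ) (u • (axisOf δ g : Set X)) ∩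
                Metric.cthickening (20 * δ) (v • (axisOf δ g : Set X))) ≤ ENNReal.ofReal D) →
        ∀ b : ℕ,
          2 / stableLength g p * (D + 5 * energyAt U p + 104 * δ + α) ≤ (b : ℝ) →
          ((fun u : G => u * g ^ b * u⁻¹) '' U' ⊆ U ^ (b + 2)) ∧
          ((fun u : G => u * g ^ b * u⁻¹) '' U').ncard = U'.ncard ∧
          ReducedAt δ α ((fun u : G => u * g ^ b * u⁻¹) '' U') p := by
  intro G _ X _ _ δ α hδ hα hyp geo hiso p U hUf hUs g hgU hstab _ D hD U' hU' hdiam b hb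
  have : IsIsometricSMul G X := ⟨hiso⟩
  have hlp := hstab p
  have hl0 : 0 < stableLength g p := by linarith
  set L := energyAt U p with hL_def
  have hE : ∀ w ∈ U, dist (w • p) p ≤ L := fun w hw =>
    le_csSup (hUf.image _).bddAbove ⟨w, hw, rfl⟩
  have hL0 : 0 ≤ L := dist_nonneg.trans (hE g hgU)
  have hbl : 2 * (D + 5 * L + 104 * δ + α) ≤ b * stableLength g p := by
    rwa [div_mul_eq_mul_div, div_le_iff₀ hl0] at hb
  have hb1 : 1 ≤ b := by
    rcases Nat.eq_zero_or_pos b with rfl | h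
    · simp only [Nat.cast_zero, zero_mul] at hbl
      linarith
    · exact h
  have hinv : ∀ u : G, (u * g ^ b * u⁻¹)⁻¹ = u * g⁻¹ ^ b * u⁻¹ := fun u => by
    rw [inv_pow]
    group
  -- The Gromov product bound for two conjugates of `g^{±b}` that are formally distinct.
  have main : ∀ u ∈ U', ∀ v ∈ U', ∀ h k : G, (h = g ∨ h = g⁻¹) → (k = g ∨ k = g⁻¹) →
      (u ≠ v ∨ h ≠ k) →
      gromov ((u * h ^ b * u⁻¹) • p) ((v * k ^ b * v⁻¹) • p) p <
        min (dist ((u * h ^ b * u⁻¹) • p) p) (dist ((v * k ^ b * v⁻¹) • p) p) / 2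
          - α - 50 * δ := by
    intro u hu v hv h k hh hk hne
    by_cases huv : u = v
    · subst huv
      have hhk : h ≠ k := by simpa using hne
      have key := gromov_lt_of_inv (α := α) hδ hyp g u p hb1 (by linarith) (by linarith)
      rcases hh with rfl | rfl <;> rcases hk with rfl | rfl
      · exact absurd rfl hhk
      · exact key
      · rw [gromov_comm', min_comm]
        exact key
      · exact absurd rfl hhk
    · exact gromov_lt_of_ne hδ hα hyp geo g h k u v hh hk p hlp hb1 hD (hE g hgU)
        (hE u (hU' hu)) (hE v (hU' hv)) hbl (hdiam u hu v hv huv)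
  -- Formally distinct conjugates are distinct, because `(x, x)_p = d(x, p)`.
  have main_ne : ∀ u ∈ U', ∀ v ∈ U', ∀ h k : G, (h = g ∨ h = g⁻¹) → (k = g ∨ k = g⁻¹) →
      (u ≠ v ∨ h ≠ k) → u * h ^ b * u⁻¹ ≠ v * k ^ b * v⁻¹ := by
    intro u hu v hv h k hh hk hne heq
    have := main u hu v hv h k hh hk hne
    rw [← heq, min_self] at this
    unfold gromov at this
    rw [dist_self] at this
    have := dist_nonneg (x := (u * h ^ b * u⁻¹) • p) (y := p)
    linarith
  have hgg : g ≠ g⁻¹ := by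
    intro heq
    have h2 := stableLength_mul_le g p p 2
    have : g ^ 2 = 1 := by
      rw [pow_two]
      nth_rewrite 2 [heq]
      exact mul_inv_cancel g
    rw [this, one_smul, dist_self] at h2
    push_cast at h2
    linarith
  refine ⟨?_, ?_, ?_, ?_⟩
  · rintro _ ⟨u, hu, rfl⟩
    have hui : u⁻¹ ∈ U := by
      rw [← hUs]
      simpa using hU' hu
    have : b + 2 = 1 + b + 1 := by omega
    rw [this, pow_succ, pow_add, pow_one]
    exact Set.mul_mem_mul (Set.mul_mem_mul (hU' hu) (Set.pow_mem_pow hgU)) hui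
  · refine Set.InjOn.ncard_image fun u hu v hv heq => ?_
    by_contra hne
    exact main_ne u hu v hv g g (Or.inl rfl) (Or.inl rfl) (Or.inl hne) heq
  · rw [Set.eq_empty_iff_forall_notMem]
    rintro s ⟨⟨u, hu, rfl⟩, v, hv, hsv⟩
    have hsv' : v * g ^ b * v⁻¹ = (u * g ^ b * u⁻¹)⁻¹ := hsv
    rw [hinv] at hsv'
    exact main_ne v hv u hu g g⁻¹ (Or.inl rfl) (Or.inr rfl) (Or.inr hgg) hsv'
  · have hform : ∀ s ∈ (fun u : G => u * g ^ b * u⁻¹) '' U' ∪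
        ((fun u : G => u * g ^ b * u⁻¹) '' U')⁻¹,
        ∃ u ∈ U', ∃ h : G, (h = g ∨ h = g⁻¹) ∧ s = u * h ^ b * u⁻¹ := by
      rintro s (⟨u, hu, rfl⟩ | ⟨u, hu, hs⟩)
      · exact ⟨u, hu, g, Or.inl rfl, rfl⟩
      · refine ⟨u, hu, g⁻¹, Or.inr rfl, ?_⟩
        have hs' : u * g ^ b * u⁻¹ = s⁻¹ := hs
        rw [← hinv, hs', inv_inv]
    intro s hs t ht hst
    obtain ⟨u, hu, h, hh, rfl⟩ := hform s hs
    obtain ⟨v, hv, k, hk, rfl⟩ := hform t ht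
    refine main u hu v hv h k hh hk ?_
    by_contra hcon
    push Not at hcon
    exact hst (by rw [hcon.1, hcon.2])
end
end

section
/- Let δ > 0, let G be a group acting by isometries on a δ-hyperbolic geodesic metric space X, let U ⊆ G be a finite subset that is 200δ-reduced at p ∈ X, and let Y ⊆ X be a 10δ-quasi-convex subset. Let w ≡ u₁⋯u_n be a reduced word over U ∪ U⁻¹ and set x₀ = p and xᵢ = u₁⋯uᵢp. Suppose y₀ and y_n are δ-projections of p and wp on Y satisfying d(p,y₀) ≤ (1/2)·d(u₁p,p) − 200δ and d(wp,y_n) ≤ (1/2)·d(u_np,p) − 200δ. Then for every i ∈ {1,…,n−1} and every δ-projection yᵢ of xᵢ on Y, one has d(xᵢ,yᵢ) < (1/2)·min{d(uᵢp,p), d(u_{i+1}p,p)} − 200δ. -/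
/-!
Write `xᵢ` for the vertices of the broken geodesic and `aᵢ = d(xᵢ₋₁, xᵢ)`. Being reduced means that
at every inner vertex the backtracking `(xᵢ₋₁, xᵢ₊₁)_{xᵢ}` is less than `min(aᵢ, aᵢ₊₁)/2 - 250δ`.
A point `y` close to `x₀` satisfies `(y, x₁)_{x₀} ≤ a₁/2 - 200δ`, and this bound propagates
along the path (`forward_bound`): if it holds on one edge, then seen from the end of this edge `y`
lies far in the backward direction, so the four point inequality replaces `xᵢ₋₁` by `y` in
`(xᵢ₋₁, xᵢ₊₁)_{xᵢ}` at the cost of `δ`. Doing this with `y₀` from the left and with `yₙ` from the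
right gives `(y₀, yₙ)_{xᵢ} ≤ min(aᵢ, aᵢ₊₁)/2 - 248δ`, and quasi-convexity of `Y` turns this
into the required bound on `d(xᵢ, Y)`.
-/

open Pointwise Filter

noncomputable section

universe u v

/-- The four point inequality as it is used below: if `b` has a small product with `a` and a large
one with `c`, then `c` has a small product with `a`. -/
lemma IsDeltaHyperbolic.transfer {X : Type*} [MetricSpace X] {δ r : ℝ}
    (h : IsDeltaHyperbolic X δ) {a b c t : X} (h₁ : gromov a b t ≤ r)
    (h₂ : r + δ < gromov c b t) : gromov a c t ≤ r + δ := by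
  have := h a c b t
  rcases min_cases (gromov a c t) (gromov c b t) with ⟨h', _⟩ | ⟨h', _⟩ <;> linarith

lemma gromov_comm'_s11 {X : Type*} [MetricSpace X] (a b t : X) : gromov a b t = gromov b a t := by
  simp only [gromov, dist_comm a b]; ring

lemma gromov_swap {X : Type*} [MetricSpace X] (y s t : X) :
    gromov y s t = dist s t - gromov y t s := by
  simp only [gromov, dist_comm s t]; ring

/-- One vertex `x'` of the broken geodesic, with neighbours `x` and `x''`. The bound on the
incoming edge yields the bound at `x'`, which is even relative to both adjacent edges. -/
lemma vertex_step {X : Type*} [MetricSpace X] {δ : ℝ} (hδ : 0 < δ)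
    (h : IsDeltaHyperbolic X δ) {x x' x'' y : X}
    (hx : gromov x x'' x' < min (dist x x') (dist x' x'') / 2 - 250 * δ)
    (hy : gromov y x' x ≤ dist x x' / 2 - 200 * δ) :
    gromov y x'' x' ≤ min (dist x x') (dist x' x'') / 2 - 249 * δ := by
  have h1 := gromov_swap y x x'
  have h2 := min_le_left (dist x x') (dist x' x'')
  rw [gromov_comm'_s11] at hx ⊢
  have := h.transfer (c := y) hx.le (by linarith)
  linarith

lemma forward_bound {X : Type*} [MetricSpace X] {δ : ℝ} (hδ : 0 < δ)
    (h : IsDeltaHyperbolic X δ) (n : ℕ) (x : ℕ → X) (y : X)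
    (hx : ∀ i, i + 2 ≤ n → gromov (x i) (x (i + 2)) (x (i + 1)) <
      min (dist (x i) (x (i + 1))) (dist (x (i + 1)) (x (i + 2))) / 2 - 250 * δ)
    (hy : dist (x 0) y ≤ dist (x 0) (x 1) / 2 - 200 * δ) :
    ∀ i, i + 1 ≤ n → gromov y (x (i + 1)) (x i) ≤ dist (x i) (x (i + 1)) / 2 - 200 * δ := by
  intro i
  induction i with
  | zero =>
    intro _
    have h1 := dist_triangle (x 1) y (x 0)
    have h2 := dist_comm (x 0) y
    have h3 := dist_comm (x 1) y
    have h4 := dist_triangle (x 1) (x 0) y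
    simp only [gromov, zero_add]
    linarith
  | succ i ih =>
    intro hi
    have h1 := vertex_step hδ h (hx i (by omega)) (ih (by omega))
    have h2 := min_le_right (dist (x i) (x (i + 1))) (dist (x (i + 1)) (x (i + 2)))
    linarith

/-- the shortening conditions pass to intermediate points of the
broken geodesic (letters are `uu 1, …, uu n`; `x i = uu 1 ⋯ uu i • p`). -/
theorem shortening_subword :
    ∀ (G : Type u) [Group G] (X : Type v) [MetricSpace X] [MulAction G X],
    ∀ δ : ℝ, 0 < δ →
      IsDeltaHyperbolic X δ → IsGeodesicSpace X → IsometricAction G X →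
      ∀ (p : X) (U : Set G), U.Finite → ReducedAt δ (200 * δ) U p →
      ∀ Y : Set X, SigmaQuasiConvex (10 * δ) Y →
      ∀ (n : ℕ) (uu : ℕ → G), 1 ≤ n →
        (∀ i, 1 ≤ i → i ≤ n → uu i ∈ U ∪ U⁻¹) →
        (∀ i, 1 ≤ i → i + 1 ≤ n → uu (i + 1) ≠ (uu i)⁻¹) →
        ∀ x : ℕ → X,
          (∀ i, x i = (((List.range i).map fun j => uu (j + 1)).prod) • p) →
        ∀ y₀ yn : X, IsDProj δ Y p y₀ → IsDProj δ Y (x n) yn →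
          dist p y₀ ≤ dist (uu 1 • p) p / 2 - 200 * δ →
          dist (x n) yn ≤ dist (uu n • p) p / 2 - 200 * δ →
          ∀ j, j + 2 ≤ n → ∀ yi : X, IsDProj δ Y (x (j + 1)) yi →
            dist (x (j + 1)) yi <
              min (dist (uu (j + 1) • p) p) (dist (uu (j + 2) • p) p) / 2 - 200 * δ := by
  intro G _ X _ _ δ hδ hyp _ hiso p U _ hred Y hY n uu hn hU hne x hx y₀ yn hy₀ hyn hd₀ hdn j hj
    yi hyi
  set w : ℕ → G := fun i => ((List.range i).map fun j => uu (j + 1)).prod with hw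
  have hxw : ∀ i, x i = w i • p := hx
  have hws : ∀ i, w (i + 1) = w i * uu (i + 1) := fun i => by
    simp [hw, List.range_succ]
  have hdist : ∀ (g : G) (a b : X), dist (g • a) (g • b) = dist a b :=
    fun g a b => (hiso g).dist_eq a b
  have hinv : ∀ g : G, dist (g⁻¹ • p) p = dist (g • p) p := fun g => by
    rw [← hdist g, smul_inv_smul, dist_comm]
  have hedge : ∀ i, dist (x i) (x (i + 1)) = dist (uu (i + 1) • p) p := fun i => by
    rw [hxw, hxw, hws, mul_smul, hdist, dist_comm]
  have hx0 : x 0 = p := by simp [hx]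
  have hUinv : ∀ g ∈ U ∪ U⁻¹, g⁻¹ ∈ U ∪ U⁻¹ := by
    rintro g (hg | hg)
    · right; simpa using hg
    · left; exact hg
  -- Translating by `(w (i + 1))⁻¹` moves the vertex `x (i + 1)` to `p`.
  have hturn : ∀ i, i + 2 ≤ n → gromov (x i) (x (i + 2)) (x (i + 1)) <
      min (dist (x i) (x (i + 1))) (dist (x (i + 1)) (x (i + 2))) / 2 - 250 * δ := by
    intro i hi
    have h1 := hred.2 (uu (i + 1))⁻¹ (hUinv _ (hU _ (by omega) (by omega)))
      (uu (i + 2)) (hU _ (by omega) (by omega)) (hne (i + 1) (by omega) (by omega)).symm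
    have e1 : x i = w (i + 1) • (uu (i + 1))⁻¹ • p := by
      rw [hws, mul_smul, smul_inv_smul, hxw]
    have e2 : x (i + 2) = w (i + 1) • uu (i + 2) • p := by
      rw [hxw, hws (i + 1), mul_smul]
    have e3 : gromov (x i) (x (i + 2)) (x (i + 1)) =
        gromov ((uu (i + 1))⁻¹ • p) (uu (i + 2) • p) p := by
      rw [e1, e2, hxw (i + 1)]
      simp only [gromov, hdist]
    rw [hinv] at h1
    rw [e3, hedge i, hedge (i + 1)]
    linarith
  have hP := forward_bound hδ hyp n x y₀ hturn (by rw [hedge, hx0]; exact hd₀)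
  -- The same bound for the path traversed backwards, starting from `x n`.
  have hQ := forward_bound hδ hyp n (fun i => x (n - i)) yn
    (by
      intro i hi
      obtain ⟨k, rfl⟩ : ∃ k, n = i + 2 + k := ⟨n - (i + 2), by omega⟩
      have h1 := hturn k (by omega)
      have e1 : i + 2 + k - i = k + 2 := by omega
      have e2 : i + 2 + k - (i + 1) = k + 1 := by omega
      have e3 : i + 2 + k - (i + 2) = k := by omega
      simp only [e1, e2, e3]
      rw [gromov_comm'_s11, dist_comm (x (k + 2)), dist_comm (x (k + 1)) (x k), min_comm]
      exact h1)
    (by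
      obtain ⟨k, rfl⟩ : ∃ k, n = k + 1 := ⟨n - 1, by omega⟩
      simp only [Nat.sub_zero, Nat.add_sub_cancel]
      rw [dist_comm (x (k + 1)) (x k), hedge]
      exact hdn)
    (n - (j + 2)) (by omega)
  have e1 : n - (n - (j + 2)) = j + 2 := by omega
  have e2 : n - (n - (j + 2) + 1) = j + 1 := by omega
  simp only [e1, e2] at hQ
  have h1 := vertex_step hδ hyp (hturn j hj) (hP j (by omega))
  have h2 := gromov_swap yn (x (j + 2)) (x (j + 1))
  have h3 := min_le_right (dist (x j) (x (j + 1))) (dist (x (j + 1)) (x (j + 2)))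
  have h4 := hyp.transfer (c := yn) h1 (by linarith [dist_comm (x (j + 1)) (x (j + 2))])
  have h5 := hY (x (j + 1)) y₀ hy₀.1 yn hyn.1
  have h6 := hyi.2
  rw [← hedge j, ← hedge (j + 1)]
  linarith
end
end

section
/- Let δ > 0, let G be a group acting by isometries on a δ-hyperbolic geodesic metric space X, let U ⊆ G be a finite subset that is 200δ-reduced at p ∈ X, and let L₀ ≥ L(U,p). Let Y₁, Y₂ ⊆ X and let τ > 0. If a reduced word w over U ∪ U⁻¹ is simultaneously a τ-shortening word over Y₁ and a τ-shortening word over Y₂, then diam(Y₁^{+L₀} ∩ Y₂^{+L₀}) > τ. -/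
/-!
The projections of `p` and `wp` on `Y₁` already both lie in the intersection of the two
thickenings. Write `y₀, z₀` for the given `δ`-projections of `p` on `Y₁` and `Y₂`. By (S2) both
are within `d(u₁p,p)/2` of `p`, so `d(y₀,z₀) ≤ d(u₁p,p) ≤ L(U,p) ≤ L₀` and `y₀` lies in both
thickenings. The same holds at the other end, with `wp` and the last letter of `w`. By (S1) the
two projections on `Y₁` are more than `τ` apart.
-/

open Pointwise Filter

noncomputable section

universe u v

theorem dist_smul_le_of_energyAt_le {G X : Type*} [Group G] [MetricSpace X] [MulAction G X]
    (hact : IsometricAction G X) {p : X} {U : Set G} (hU : U.Finite) {L₀ : ℝ}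
    (hL : energyAt U p ≤ L₀) {a : G} (ha : a ∈ U ∪ U⁻¹) : dist (a • p) p ≤ L₀ := by
  have key : ∀ u ∈ U, dist (u • p) p ≤ L₀ := fun u hu =>
    (le_csSup (hU.image _).bddAbove (Set.mem_image_of_mem _ hu)).trans hL
  rcases ha with ha | ha
  · exact key a ha
  · have h := (hact a).dist_eq (a⁻¹ • p) p
    simp only [smul_inv_smul] at h
    rw [dist_comm, h]
    exact key _ ha

/-- The projection `y ∈ Y` is within `L₀` of `z ∈ Z` because each is within `c / 2` of `q`. In the
application `q` is an endpoint `p` or `wp` and `c` is the displacement of `p` by the letter at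
that end. -/
theorem mem_inter_cthickening {X : Type*} [MetricSpace X] {δ c L₀ : ℝ} (hδ : 0 < δ)
    (hc : c ≤ L₀) {Y Z : Set X} {q y z : X} (hy : y ∈ Y) (hz : z ∈ Z)
    (hqy : dist q y ≤ c / 2 - 200 * δ) (hqz : dist q z ≤ c / 2 - 200 * δ) :
    y ∈ Metric.cthickening L₀ Y ∩ Metric.cthickening L₀ Z := by
  refine ⟨Metric.self_subset_cthickening Y hy, ?_⟩
  refine Metric.mem_cthickening_of_dist_le y z L₀ Z hz ?_
  linarith [dist_triangle_left y z q]

/-- a word cannot be a shortening word over two sets whose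
thickenings have small intersection. -/
theorem shortening_fellow_travelling :
    ∀ (G : Type u) [Group G] (X : Type v) [MetricSpace X] [MulAction G X],
    ∀ δ : ℝ, 0 < δ →
      IsDeltaHyperbolic X δ → IsGeodesicSpace X → IsometricAction G X →
      ∀ (p : X) (U : Set G), U.Finite → ReducedAt δ (200 * δ) U p →
      ∀ L₀ : ℝ, energyAt U p ≤ L₀ →
      ∀ (Y₁ Y₂ : Set X) (τ : ℝ), 0 < τ →
      ∀ l : List G,
        IsShorteningWord δ τ U p Y₁ l → IsShorteningWord δ τ U p Y₂ l →
        ENNReal.ofReal τ <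
          EMetric.diam (Metric.cthickening L₀ Y₁ ∩ Metric.cthickening L₀ Y₂) := by
  intro G _ X _ _ δ hδ _ _ hact p U hU _ L₀ hL Y₁ Y₂ τ hτ l h₁ h₂
  obtain ⟨hne, ⟨hl, _⟩, y₀, y₁, hy₀, hy₁, hτy, hfy, hly⟩ := h₁
  obtain ⟨_, _, z₀, z₁, hz₀, hz₁, _, hfz, hlz⟩ := h₂
  have hhead : l.head hne ∈ l.head? := List.head?_eq_some_head hne
  have hlast : l.getLast hne ∈ l.getLast? := List.getLast?_eq_some_getLast hne
  have m₀ := mem_inter_cthickening hδ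
    (dist_smul_le_of_energyAt_le hact hU hL (hl _ (List.head_mem hne)))
    hy₀.1 hz₀.1 (hfy _ hhead) (hfz _ hhead)
  have m₁ := mem_inter_cthickening hδ
    (dist_smul_le_of_energyAt_le hact hU hL (hl _ (List.getLast_mem hne)))
    hy₁.1 hz₁.1 (hly _ hlast) (hlz _ hlast)
  refine lt_of_lt_of_le ?_ (Metric.edist_le_ediam_of_mem m₀ m₁)
  rw [edist_dist]
  exact (ENNReal.ofReal_lt_ofReal_iff (hτ.trans hτy)).2 hτy
end
end

section
/- Let δ > 0, let G be a group acting by isometries on a δ-hyperbolic geodesic metric space X, let U ⊆ G be a finite subset that is 200δ-reduced at p ∈ X, let L₀ ≥ L(U,p), and let τ ≥ 10·L₀ + 240δ. Let Y ⊆ X be a 10δ-quasi-convex subset, let w ≡ u₁⋯u_n be a reduced word over U ∪ U⁻¹, and let y₀ and y_n be δ-projections of p and wp on Y. If d(y₀,y_n) > τ, then there exists a factorization w ≡ w₀w₁w₂ as reduced words (so |w|_U = |w₀|_U + |w₁|_U + |w₂|_U) such that w₁ is a (τ − 8L₀ − 8δ)-shortening word over the translate w₀⁻¹·Y. -/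
/-!
Write `x_k` for the image of `p` under the prefix of length `k` of the word `w`, and let `π_k` be a
`δ`-projection of `x_k` on `Y`, with `π_0 = y₀` and `π_n = y_n`.

Two facts carry the proof. First, reducedness at `p` makes the broken path `x_0, …, x_n` a local
quasi-geodesic, so that for every interior vertex `x_k` the Gromov product `(x_0, x_n)_{x_k}` is at
most `(1/2) min {|u_k p - p|, |u_{k+1} p - p|} - 248 δ` (`gromov_split_le`, from `gromov_head_ge`).
Second, by quasi-convexity, when `π_k` is more than `23 δ` away from both `y₀` and `y_n`, geodesics
from `x_k` to `x_0` and to `x_n` both pass near `π_k`, so that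
`d(x_k, π_k) ≤ (x_0, x_n)_{x_k} + 13 δ` (`dist_proj_le_gromov`).
Hence every such vertex satisfies the closeness condition of a shortening word.

Consecutive projections are at distance at most `L₀ + 46 δ` (`dist_proj_le`). Let `i` be the first
index with `d(y₀, π_i) > 23 δ` and `j` the last one with `d(π_j, y_n) > 23 δ`; then `d(y₀, π_i)` and
`d(π_j, y_n)` are at most `L₀ + 69 δ`, which makes `d(π_i, π_j) > τ - 2 L₀ - 138 δ`. As letters
displace `p` by more than `500 δ`, this exceeds `τ - 8 L₀ - 8 δ`, and it forces `i < j`. The subword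
`u_{i+1} ⋯ u_j` is the shortening word.
-/

open Pointwise Filter

noncomputable section

universe u v

/-! ### Projections on quasi-convex sets -/

section Projections

variable {X : Type*} [MetricSpace X] {δ : ℝ} {Y : Set X}

/-- A geodesic from `x` to a point of `Y` passes near the projection of `x`. -/
lemma gromov_proj_le (hQ : SigmaQuasiConvex (10 * δ) Y) {x y z : X} (hy : IsDProj δ Y x y)
    (hz : z ∈ Y) : gromov x z y ≤ 11 * δ := by
  have h := hQ x y hy.1 z hz
  have h2 := hy.2
  unfold gromov at *
  rw [dist_comm y x, dist_comm z x] at h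
  rw [dist_comm z y]
  linarith

/-- If two points have distant projections, a geodesic between them passes near the projections. -/
lemma gromov_le_of_far (hH : IsDeltaHyperbolic X δ) (hQ : SigmaQuasiConvex (10 * δ) Y)
    {x y x' y' : X} (hy : IsDProj δ Y x y) (hy' : IsDProj δ Y x' y') (hd : 23 * δ < dist y y') :
    gromov x x' y' ≤ 12 * δ := by
  have h1 := gromov_proj_le hQ hy hy'.1
  have h2 := gromov_proj_le hQ hy' hy.1
  have h3 := hH x' x y y'
  have h4 : gromov x y y' = dist y y' - gromov x y' y := by
    unfold gromov
    rw [dist_comm y' y]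
    ring
  have h5 : gromov x' x y' = gromov x x' y' := by
    unfold gromov
    rw [dist_comm x' x]
    ring
  -- the right-hand side of `h4` is too large to be the minimum in the four point inequality `h3`
  rcases min_choice (gromov x' x y') (gromov x y y') with h | h <;> rw [h] at h3 <;> linarith

/-- Projections are coarsely `1`-Lipschitz. -/
lemma dist_proj_le (hδ : 0 < δ) (hH : IsDeltaHyperbolic X δ) (hQ : SigmaQuasiConvex (10 * δ) Y)
    {x y x' y' : X} (hy : IsDProj δ Y x y) (hy' : IsDProj δ Y x' y') :
    dist y y' ≤ dist x x' + 46 * δ := by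
  by_cases hd : 23 * δ < dist y y'
  · have h1 := gromov_le_of_far hH hQ hy hy' hd
    have h2 := gromov_proj_le hQ hy hy'.1
    unfold gromov at h1 h2
    rw [dist_comm y' y] at h2
    have := dist_nonneg (x := x) (y := y)
    have := dist_nonneg (x := x') (y := y')
    linarith
  · have := dist_nonneg (x := x) (y := x')
    linarith

/-- If the projection of `x` is far from those of `x₀` and `x₁`, then the distance from `x` to its
projection is controlled by `(x₀, x₁)_x`. -/
lemma dist_proj_le_gromov (hH : IsDeltaHyperbolic X δ) (hQ : SigmaQuasiConvex (10 * δ) Y)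
    {x₀ y₀ x₁ y₁ x y : X} (hy₀ : IsDProj δ Y x₀ y₀) (hy₁ : IsDProj δ Y x₁ y₁)
    (hy : IsDProj δ Y x y) (h₀ : 23 * δ < dist y₀ y) (h₁ : 23 * δ < dist y₁ y) :
    dist x y ≤ gromov x₀ x₁ x + 13 * δ := by
  have h2 := gromov_le_of_far hH hQ hy₀ hy h₀
  have h3 := gromov_le_of_far hH hQ hy₁ hy h₁
  have h4 := hH x₀ y x₁ x
  have h5 : gromov x₀ y x = dist x y - gromov x₀ x y := by
    unfold gromov
    rw [dist_comm y x]
    ring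
  have h6 : gromov y x₁ x = dist x y - gromov x₁ x y := by
    unfold gromov
    rw [dist_comm y x, dist_comm y x₁]
    ring
  rcases min_choice (gromov x₀ y x) (gromov y x₁ x) with h | h <;> rw [h] at h4 <;> linarith

lemma exists_proj (hδ : 0 < δ) (hY : Y.Nonempty) (x : X) : ∃ y, IsDProj δ Y x y := by
  obtain ⟨y, hy, h⟩ := (Metric.infDist_lt_iff (r := Metric.infDist x Y + δ) hY).1 (by linarith)
  exact ⟨y, hy, h.le⟩

end Projections

/-! ### Reduced words and their orbit paths -/

section Words

variable {G : Type*} [Group G] {X : Type*} [MetricSpace X] [MulAction G X] {δ : ℝ} {U : Set G}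
  {p : X}

lemma gromov_smul (hI : IsometricAction G X) (g : G) (x y t : X) :
    gromov (g • x) (g • y) (g • t) = gromov x y t := by
  have h : ∀ a b : X, dist (g • a) (g • b) = dist a b := (hI g).dist_eq
  simp only [gromov, h]

lemma dist_inv_smul_self (hI : IsometricAction G X) (g : G) (x : X) :
    dist (g⁻¹ • x) x = dist (g • x) x := by
  have h := (hI g).dist_eq (g⁻¹ • x) x
  simp only [smul_inv_smul] at h
  rw [← h, dist_comm]

lemma inv_mem_letters {a : G} (ha : a ∈ U ∪ U⁻¹) : a⁻¹ ∈ U ∪ U⁻¹ := by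
  rcases ha with h | h
  · right; simpa using h
  · left; simpa using h

lemma letter_ne_inv (hR : ReducedAt δ (200 * δ) U p) {a : G} (ha : a ∈ U ∪ U⁻¹) : a ≠ a⁻¹ := by
  intro h
  have hU : a ∈ U ∩ U⁻¹ := by
    rcases ha with h' | h'
    · exact ⟨h', by rw [Set.mem_inv, ← h]; exact h'⟩
    · exact ⟨by rw [h]; exact h', h'⟩
  rw [hR.1] at hU
  exact hU

lemma gromov_prod_nonneg (x y t : X) : 0 ≤ gromov x y t := by
  have := dist_triangle_right x y t
  unfold gromov
  linarith

/-- Comparing a letter with its inverse shows that every letter displaces `p` a lot. -/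
lemma letter_dist_gt (hR : ReducedAt δ (200 * δ) U p) {a : G} (ha : a ∈ U ∪ U⁻¹) :
    500 * δ < dist (a • p) p := by
  have h := hR.2 a ha a⁻¹ (inv_mem_letters ha) (letter_ne_inv hR ha)
  have h1 := gromov_prod_nonneg (a • p) (a⁻¹ • p) p
  have h2 := min_le_left (dist (a • p) p) (dist (a⁻¹ • p) p)
  linarith

lemma letter_dist_le (hI : IsometricAction G X) (hU : U.Finite) {L₀ : ℝ}
    (hL : energyAt U p ≤ L₀) {a : G} (ha : a ∈ U ∪ U⁻¹) : dist (a • p) p ≤ L₀ := by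
  have key : ∀ u ∈ U, dist (u • p) p ≤ L₀ := fun u hu =>
    (le_csSup (hU.image _).bddAbove (Set.mem_image_of_mem _ hu)).trans hL
  rcases ha with h | h
  · exact key a h
  · rw [← dist_inv_smul_self hI]
    exact key _ h

lemma IsWordOver.inv_reverse {l : List G} (h : IsWordOver U l) :
    IsWordOver U (l.map (fun g => g⁻¹)).reverse := by
  refine ⟨?_, ?_⟩
  · intro a ha
    simp only [List.mem_reverse, List.mem_map] at ha
    obtain ⟨b, hb, rfl⟩ := ha
    exact inv_mem_letters (h.1 b hb)
  · have h2 := h.2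
    unfold List.Chain' at *
    rw [List.isChain_reverse, List.isChain_map]
    refine h2.imp ?_
    intro a b hab hba
    apply hab
    rw [inv_inv] at hba
    exact hba.symm

lemma IsWordOver.of_infix {l l' : List G} (h : IsWordOver U l) (h' : l' <:+: l) :
    IsWordOver U l' :=
  ⟨fun a ha => h.1 a (h'.subset ha), List.IsChain.infix h.2 h'⟩

/-- The orbit path of a reduced word starts in the direction of its first letter: the geodesic from
`p` to the endpoint follows the first edge beyond its midpoint. -/
lemma gromov_head_ge (hδ : 0 < δ) (hH : IsDeltaHyperbolic X δ) (hI : IsometricAction G X)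
    (hR : ReducedAt δ (200 * δ) U p) (l : List G) :
    ∀ a : G, IsWordOver U (a :: l) →
      dist (a • p) p / 2 + 249 * δ ≤ gromov (a • p) ((a :: l).prod • p) p := by
  induction l with
  | nil =>
    intro a h
    have := letter_dist_gt hR (h.1 a (by simp))
    simp only [List.prod_cons, List.prod_nil, mul_one, gromov, dist_self]
    linarith
  | cons b m ih =>
    intro a h
    have hb := ih b (h.of_infix (List.suffix_cons a _).isInfix)
    have ha' := h.1 a (by simp)
    have hb' := h.1 b (by simp)
    have hne : b ≠ a⁻¹ := (List.isChain_cons_cons.1 h.2).1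
    have hr := hR.2 a⁻¹ (inv_mem_letters ha') b hb' hne.symm
    rw [dist_inv_smul_self hI] at hr
    set q := (b :: m).prod • p with hq
    -- translating by `a⁻¹` turns the product into one based at `a⁻¹ p`
    have e : gromov (a • p) ((a :: b :: m).prod • p) p = dist (a • p) p - gromov (a⁻¹ • p) q p := by
      have e1 : (a :: b :: m).prod • p = a • q := by rw [List.prod_cons, mul_smul]
      have e2 := gromov_smul hI a p q (a⁻¹ • p)
      rw [smul_inv_smul] at e2
      rw [e1, e2, ← dist_inv_smul_self hI a p]
      unfold gromov
      rw [dist_comm p (a⁻¹ • p), dist_comm q (a⁻¹ • p), dist_comm p q]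
      ring
    have h4 := hH (a⁻¹ • p) q (b • p) p
    have h5 : gromov q (b • p) p = gromov (b • p) q p := by
      unfold gromov
      rw [dist_comm q (b • p)]
      ring
    have m1 := min_le_left (dist (a • p) p) (dist (b • p) p)
    have m2 := min_le_right (dist (a • p) p) (dist (b • p) p)
    rcases min_choice (gromov (a⁻¹ • p) q p) (gromov q (b • p) p) with h | h <;>
      rw [h] at h4 <;> linarith

/-- At an interior vertex of the orbit path of a reduced word, the Gromov product of the endpoints
is at most about half of each adjacent edge. -/
lemma gromov_split_le (hδ : 0 < δ) (hH : IsDeltaHyperbolic X δ) (hI : IsometricAction G X)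
    (hR : ReducedAt δ (200 * δ) U p) (l m : List G) (a b : G)
    (h : IsWordOver U (l ++ [a] ++ b :: m)) :
    gromov p ((l ++ [a] ++ b :: m).prod • p) ((l ++ [a]).prod • p) ≤
      min (dist (a • p) p) (dist (b • p) p) / 2 - 248 * δ := by
  have hl : IsWordOver U (l ++ [a]) := h.of_infix (List.prefix_append _ _).isInfix
  have hm : IsWordOver U (b :: m) := h.of_infix (List.suffix_append _ _).isInfix
  have hb := gromov_head_ge hδ hH hI hR m b hm
  have hl' := hl.inv_reverse
  have e1 : ((l ++ [a]).map (fun g => g⁻¹)).reverse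
      = a⁻¹ :: (l.map (fun g => g⁻¹)).reverse := by simp
  have e2 : (a⁻¹ :: (l.map (fun g => g⁻¹)).reverse).prod = ((l ++ [a]).prod)⁻¹ := by
    rw [← e1, List.prod_inv_reverse]
  rw [e1] at hl'
  have ha := gromov_head_ge hδ hH hI hR _ _ hl'
  rw [e2, dist_inv_smul_self hI] at ha
  have hne : b ≠ a⁻¹ := by
    have := (List.isChain_append.1 h.2).2.2
    exact this a (by simp) b (by simp)
  have hr := hR.2 a⁻¹ (inv_mem_letters (hl.1 a (by simp))) b (hm.1 b (by simp)) hne.symm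
  rw [dist_inv_smul_self hI] at hr
  set g := (l ++ [a]).prod
  set q := (b :: m).prod • p with hq
  have e3 : gromov p ((l ++ [a] ++ b :: m).prod • p) (g • p) = gromov (g⁻¹ • p) q p := by
    rw [← gromov_smul hI g (g⁻¹ • p) q p, smul_inv_smul, List.prod_append, mul_smul]
  rw [e3]
  have h4 := hH (a⁻¹ • p) q (b • p) p
  have h5 : gromov q (b • p) p = gromov (b • p) q p := by
    unfold gromov
    rw [dist_comm q (b • p)]
    ring
  have h6 := hH (a⁻¹ • p) (g⁻¹ • p) q p
  have m1 := min_le_left (dist (a • p) p) (dist (b • p) p)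
  have m2 := min_le_right (dist (a • p) p) (dist (b • p) p)
  have h7 : gromov (a⁻¹ • p) q p ≤ min (dist (a • p) p) (dist (b • p) p) / 2 - 249 * δ := by
    rcases min_choice (gromov (a⁻¹ • p) q p) (gromov q (b • p) p) with h | h <;>
      rw [h] at h4 <;> linarith
  rcases min_choice (gromov (a⁻¹ • p) (g⁻¹ • p) p) (gromov (g⁻¹ • p) q p) with h | h <;>
    rw [h] at h6 <;> linarith

/-- The bound at the vertex of index `k` of the path, for the letters on either side. -/
lemma gromov_vertex_le (hδ : 0 < δ) (hH : IsDeltaHyperbolic X δ) (hI : IsometricAction G X)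
    (hR : ReducedAt δ (200 * δ) U p) {l : List G} (h : IsWordOver U l) (k : ℕ)
    (hk : k + 1 < l.length) :
    gromov p (l.prod • p) ((l.take (k + 1)).prod • p) ≤
      min (dist (l[k] • p) p) (dist (l[k + 1] • p) p) / 2 - 248 * δ := by
  have e1 : l.take (k + 1) = l.take k ++ [l[k]] := by
    rw [List.take_append_getElem]
  have e2 : l.drop (k + 1) = l[k + 1] :: l.drop (k + 2) := by
    rw [List.drop_eq_getElem_cons]
  have e3 : l = l.take k ++ [l[k]] ++ l[k + 1] :: l.drop (k + 2) := by
    rw [← e1, ← e2, List.take_append_drop]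
  have := gromov_split_le hδ hH hI hR (l.take k) (l.drop (k + 2)) l[k] l[k + 1] (e3 ▸ h)
  rw [← e3, ← e1] at this
  exact this

lemma IsDProj.translate (hI : IsometricAction G X) {Y : Set X} {x y : X} (g : G)
    (h : IsDProj δ Y x y) : IsDProj δ (g • Y) (g • x) (g • y) := by
  refine ⟨Set.smul_mem_smul_set h.1, ?_⟩
  have e : Metric.infDist (g • x) (g • Y) = Metric.infDist x Y := Metric.infDist_image (hI g)
  rw [e, show dist (g • x) (g • y) = dist x y from (hI g).dist_eq x y]
  exact h.2

end Words

/-! ### The shortening subword -/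

/-- a barrier implies a shortening subword. -/
theorem barrier_implies_shortening :
    ∀ (G : Type u) [Group G] (X : Type v) [MetricSpace X] [MulAction G X],
    ∀ δ : ℝ, 0 < δ →
      IsDeltaHyperbolic X δ → IsGeodesicSpace X → IsometricAction G X →
      ∀ (p : X) (U : Set G), U.Finite → ReducedAt δ (200 * δ) U p →
      ∀ L₀ : ℝ, energyAt U p ≤ L₀ →
      ∀ τ : ℝ, 10 * L₀ + 240 * δ ≤ τ →
      ∀ Y : Set X, SigmaQuasiConvex (10 * δ) Y →
      ∀ l : List G, IsWordOver U l →
      ∀ y₀ yn : X, IsDProj δ Y p y₀ → IsDProj δ Y (l.prod • p) yn →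
        τ < dist y₀ yn →
        ∃ l₀ l₁ l₂ : List G, l = l₀ ++ l₁ ++ l₂ ∧
          IsShorteningWord δ (τ - 8 * L₀ - 8 * δ) U p ((l₀.prod)⁻¹ • Y) l₁ := by
  intro G _ X _ _ δ hδ hH _ hI p U hU hR L₀ hL τ hτ Y hQ l hl y₀ yn hy₀ hyn hfar
  have hL0 : 0 ≤ L₀ := by
    refine le_trans (Real.sSup_nonneg ?_) hL
    rintro _ ⟨u, _, rfl⟩
    exact dist_nonneg
  by_cases hn : l = []
  · -- both points are projections of `p`, hence close to each other
    subst hn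
    have := dist_proj_le hδ hH hQ hy₀ hyn
    simp only [List.prod_nil, one_smul, dist_self] at this
    linarith
  have hlen : 0 < l.length := List.length_pos_iff.2 hn
  have hL500 : 500 * δ < L₀ :=
    (letter_dist_gt hR (hl.1 _ (List.getElem_mem hlen))).trans_le
      (letter_dist_le hI hU hL (hl.1 _ (List.getElem_mem hlen)))
  obtain ⟨π, hπ, hπ0, hπn⟩ : ∃ π : ℕ → X, (∀ k, IsDProj δ Y ((l.take k).prod • p) (π k)) ∧
      π 0 = y₀ ∧ π l.length = yn := by
    choose f hf using fun k : ℕ => exists_proj hδ ⟨y₀, hy₀.1⟩ ((l.take k).prod • p)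
    refine ⟨fun k => if k = 0 then y₀ else if k = l.length then yn else f k, ?_, ?_, ?_⟩
    · intro k
      dsimp only
      split_ifs with h1 h2
      · subst h1; simpa using hy₀
      · subst h2; simpa using hyn
      · exact hf k
    · simp
    · simp [hn]
  have hstep : ∀ k, k < l.length → dist (π k) (π (k + 1)) ≤ L₀ + 46 * δ := by
    intro k hk
    have h1 := dist_proj_le hδ hH hQ (hπ k) (hπ (k + 1))
    have e : (l.take (k + 1)).prod • p = (l.take k).prod • l[k] • p := by
      rw [← List.take_append_getElem hk, List.prod_append, mul_smul, List.prod_singleton]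
    have h2 : dist ((l.take k).prod • p) ((l.take k).prod • l[k] • p) = dist p (l[k] • p) :=
      (hI _).dist_eq _ _
    have h3 := letter_dist_le hI hU hL (hl.1 _ (List.getElem_mem hk))
    rw [dist_comm] at h3
    rw [e, h2] at h1
    linarith
  classical
  -- `i` is the first index whose projection has left the vicinity of `y₀`
  have hexi : ∃ k, 23 * δ < dist y₀ (π k) := ⟨l.length, by rw [hπn]; linarith⟩
  obtain ⟨i, hi, hi_le, hin⟩ : ∃ i, 23 * δ < dist y₀ (π (i + 1)) ∧
      dist y₀ (π (i + 1)) ≤ L₀ + 69 * δ ∧ i + 1 ≤ l.length := by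
    have hs := Nat.find_spec hexi
    have hle : Nat.find hexi ≤ l.length := Nat.find_min' hexi (by rw [hπn]; linarith)
    have hpos : Nat.find hexi ≠ 0 := by
      intro h0
      rw [h0, hπ0, dist_self] at hs
      linarith
    obtain ⟨i, hi⟩ := Nat.exists_eq_succ_of_ne_zero hpos
    have hmin := Nat.find_min hexi (m := i) (by omega)
    rw [hi] at hs hle
    have h1 := hstep i (by omega)
    have h2 := dist_triangle y₀ (π i) (π (i + 1))
    exact ⟨i, hs, by linarith, hle⟩
  -- `j` is the last index whose projection has not reached the vicinity of `yn`
  let P : ℕ → Prop := fun k => 23 * δ < dist (π k) yn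
  obtain ⟨j, hj, hj_le, hjn, hjmax⟩ : ∃ j, 23 * δ < dist (π j) yn ∧
      dist (π j) yn ≤ L₀ + 69 * δ ∧ j < l.length ∧ ∀ k ≤ l.length, P k → k ≤ j := by
    have hP0 : P 0 := by
      change 23 * δ < dist (π 0) yn
      rw [hπ0]; linarith
    have hs : P (Nat.findGreatest P l.length) := Nat.findGreatest_spec (Nat.zero_le _) hP0
    have hle := Nat.findGreatest_le (P := P) l.length
    have hmax : ∀ k ≤ l.length, P k → k ≤ Nat.findGreatest P l.length :=
      fun k hk hPk => Nat.le_findGreatest hk hPk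
    generalize hj : Nat.findGreatest P l.length = j at hs hle hmax
    have hlt : j < l.length := by
      refine lt_of_le_of_ne hle ?_
      intro hjl
      have hs' : 23 * δ < dist (π j) yn := hs
      rw [hjl] at hs'
      rw [hπn, dist_self] at hs'
      linarith
    have hnot : ¬ 23 * δ < dist (π (j + 1)) yn := fun h =>
      absurd (hmax (j + 1) hlt h) (by omega)
    have h1 := hstep j hlt
    have h2 := dist_triangle (π j) (π (j + 1)) yn
    exact ⟨j, hs, by linarith, hlt, hmax⟩
  have htri1 := dist_triangle y₀ (π (i + 1)) yn
  have htri2 := dist_triangle (π (i + 1)) (π j) yn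
  have htri3 := dist_triangle y₀ (π j) yn
  have hdist : τ - 8 * L₀ - 8 * δ < dist (π (i + 1)) (π j) := by linarith
  have hij : i + 1 < j := by
    refine lt_of_le_of_ne (hjmax (i + 1) hin ?_) ?_
    · change 23 * δ < dist (π (i + 1)) yn
      linarith
    · rintro rfl
      rw [dist_self] at hdist
      linarith
  have hclose : ∀ k (hk : k + 1 < l.length), 23 * δ < dist y₀ (π (k + 1)) →
      23 * δ < dist (π (k + 1)) yn →
      dist ((l.take (k + 1)).prod • p) (π (k + 1)) ≤
        min (dist (l[k] • p) p) (dist (l[k + 1] • p) p) / 2 - 235 * δ := by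
    intro k hk h1 h2
    rw [dist_comm] at h2
    have h3 := dist_proj_le_gromov hH hQ hy₀ hyn (hπ (k + 1)) h1 h2
    have h4 := gromov_vertex_le hδ hH hI hR hl k hk
    linarith
  obtain ⟨t, rfl⟩ : ∃ t, j = i + 1 + t + 1 := ⟨j - (i + 2), by omega⟩
  have hci := hclose i (by omega) hi (by linarith)
  have hcj := hclose (i + 1 + t) hjn (by linarith) hj
  set g := (l.take (i + 1)).prod with hg
  set l₁ := (l.drop (i + 1)).take (t + 1) with hl₁
  have hsplit : l.take (i + 1 + t + 1) = l.take (i + 1) ++ l₁ := by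
    rw [hl₁, add_assoc (i + 1) t 1, List.take_add]
  have hword : l = l.take (i + 1) ++ l₁ ++ l.drop (i + 1 + t + 1) := by
    rw [← hsplit, List.take_append_drop]
  have hprod : (l.take (i + 1 + t + 1)).prod = g * l₁.prod := by
    rw [hsplit, List.prod_append]
  have hhead : l₁.head? = some l[i + 1] := by
    rw [hl₁, List.drop_eq_getElem_cons (by omega), List.take_succ_cons, List.head?_cons]
  have hlast : l₁.getLast? = some l[i + 1 + t] := by
    have hlen₁ : l₁.length = t + 1 := by
      rw [hl₁, List.length_take, List.length_drop]
      omega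
    rw [List.getLast?_eq_getElem?, hlen₁, hl₁]
    simp [List.getElem?_drop]
  have hgp : ∀ x y : X, dist (g⁻¹ • x) (g⁻¹ • y) = dist x y := (hI g⁻¹).dist_eq
  have ep : g⁻¹ • (g • p) = p := inv_smul_smul g p
  have eq' : g⁻¹ • ((l.take (i + 1 + t + 1)).prod • p) = l₁.prod • p := by
    rw [hprod, mul_smul, inv_smul_smul]
  have hne : l₁ ≠ [] := by
    intro h0
    rw [h0] at hhead
    simp at hhead
  refine ⟨l.take (i + 1), l₁, l.drop (i + 1 + t + 1), hword, hne,
    hl.of_infix ⟨l.take (i + 1), l.drop (i + 1 + t + 1), hword.symm⟩,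
    g⁻¹ • π (i + 1), g⁻¹ • π (i + 1 + t + 1), ?_, ?_, ?_, ?_, ?_⟩
  · have := (hπ (i + 1)).translate hI g⁻¹
    rwa [← hg, ep] at this
  · have := (hπ (i + 1 + t + 1)).translate hI g⁻¹
    rwa [eq'] at this
  · rw [hgp]
    exact hdist
  · intro a ha
    rw [hhead, Option.mem_some_iff] at ha
    subst ha
    have h1 := min_le_right (dist (l[i] • p) p) (dist (l[i + 1] • p) p)
    have h2 := hgp (g • p) (π (i + 1))
    rw [ep] at h2
    linarith
  · intro a ha
    rw [hlast, Option.mem_some_iff] at ha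
    subst ha
    have h1 := min_le_left (dist (l[i + 1 + t] • p) p) (dist (l[i + 1 + t + 1] • p) p)
    have h2 := hgp ((l.take (i + 1 + t + 1)).prod • p) (π (i + 1 + t + 1))
    rw [eq'] at h2
    linarith
end
end
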